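/- arXiv:1505.02315 — 7 statements merged into one kernel-verified Lean document; each statement's English description precedes it below -/
import Mathlib

section
/- Let K be an arbitrary field, U and V finite-dimensional K-vector spaces, and 𝒮 an affine subspace of L(U,V) with codim 𝒮 ≤ dim V − 2. Then every range-compatible affine map F : 𝒮 → V is local. -/
attribute [local instance] AffineSubspace.toAddTorsor

/-- The exceptional set of forms attached to `φ`. -/
def RCexc {K U V : Type*} [Field K] [AddCommGroup U] [Module K U] [AddCommGroup V] [Module K V]
    (D : Submodule K (U →ₗ[K] V)) (φ : Module.Dual K V) : Set (Module.Dual K V) :=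
  {ψ | ∃ z y : U, z ≠ 0 ∧ ∀ s ∈ D, φ (s y) + ψ (s z) = 0}

/-- Evaluation functional `s ↦ φ (s y)`. -/
def RCev {K U V : Type*} [Field K] [AddCommGroup U] [Module K U] [AddCommGroup V] [Module K V]
    (φ : Module.Dual K V) (y : U) : Module.Dual K (U →ₗ[K] V) :=
  φ ∘ₗ (LinearMap.applyₗ y)

theorem RCexc_span {K U V : Type*} [Field K]
    [AddCommGroup U] [Module K U] [FiniteDimensional K U]
    [AddCommGroup V] [Module K V] [FiniteDimensional K V]
    (D : Submodule K (U →ₗ[K] V))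
    (hcodim : Module.finrank K (U →ₗ[K] V) + 2 ≤
      Module.finrank K D + Module.finrank K V) (φ : Module.Dual K V) :
    ∃ H : Submodule K (Module.Dual K V), H ≠ ⊤ ∧ φ ∈ H ∧ RCexc D φ ⊆ H := by
  refine ⟨Submodule.span K (insert φ (RCexc D φ)), ?_,
    Submodule.subset_span (Set.mem_insert _ _),
    (Set.subset_insert _ _).trans Submodule.subset_span⟩
  intro htop
  let Q := Module.Dual K V ⧸ Submodule.span K {φ}
  let q : Module.Dual K V →ₗ[K] Q := (Submodule.span K {φ}).mkQ
  have hq : Function.Surjective q := Submodule.mkQ_surjective _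
  have hqφ : q φ = 0 := by
    exact (Submodule.Quotient.mk_eq_zero _).2 (Submodule.mem_span_singleton_self (R := K) φ)
  have hspan : Submodule.span K (q '' RCexc D φ) = ⊤ := by
    have h1 : Submodule.map q (Submodule.span K (insert φ (RCexc D φ))) = ⊤ := by
      rw [htop, Submodule.map_top, LinearMap.range_eq_top.2 hq]
    rw [Submodule.map_span, Set.image_insert_eq, hqφ, Submodule.span_insert_zero] at h1
    exact h1
  obtain ⟨b, hbs, hbspan, hbli⟩ := exists_linearIndependent K (q '' RCexc D φ)
  rw [hspan] at hbspan
  have hbfin : b.Finite := hbli.setFinite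
  have : Fintype b := hbfin.fintype
  have hcardQ : Module.finrank K Q = Fintype.card b := by
    have := Module.finrank_eq_card_basis (Module.Basis.mk hbli (by simp [hbspan]))
    exact this
  have hQ : Module.finrank K V ≤ Fintype.card b + 1 := by
    have h1 := Submodule.finrank_quotient_add_finrank (Submodule.span K {φ})
    have h2 : Module.finrank K (Submodule.span K {φ}) ≤ 1 := by
      simpa using finrank_span_le_card (R := K) ({φ} : Set (Module.Dual K V))
    rw [Subspace.dual_finrank_eq] at h1
    change Module.finrank K Q + _ = _ at h1
    omega
  have hch : ∀ i : b, ∃ ψ : Module.Dual K V, ∃ z y : U, q ψ = i ∧ z ≠ 0 ∧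
      ∀ s ∈ D, φ (s y) + ψ (s z) = 0 := by
    intro i
    obtain ⟨ψ, ⟨z, y, hz, h⟩, hψ⟩ := hbs i.2
    exact ⟨ψ, z, y, hψ, hz, h⟩
  choose ψ z y hψ hz h using hch
  let t : b → D.dualAnnihilator := fun i => ⟨RCev φ (y i) + RCev (ψ i) (z i), by
    rw [Submodule.mem_dualAnnihilator]
    intro s hs
    exact h i s hs⟩
  have hli : LinearIndependent K t := by
    refine LinearIndependent.of_comp D.dualAnnihilator.subtype ?_
    change LinearIndependent K
      (fun i => RCev φ (y i) + RCev (ψ i) (z i) : b → ((U →ₗ[K] V) →ₗ[K] K))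
    rw [Fintype.linearIndependent_iff]
    intro a ha i
    have key : ∀ f : Module.Dual K U, a i * f (z i) = 0 := by
      intro f
      have e1 : (∑ j, a j * f (y j)) • φ + ∑ j, (a j * f (z j)) • ψ j = 0 := by
        ext v
        have e2 := LinearMap.congr_fun ha (f.smulRight v)
        simp only [RCev, LinearMap.sum_apply,
          LinearMap.smul_apply, LinearMap.add_apply, LinearMap.comp_apply,
          LinearMap.applyₗ_apply_apply, LinearMap.smulRight_apply, map_smul, smul_eq_mul,
          LinearMap.zero_apply, Finset.sum_mul] at e2 ⊢
        rw [← e2, ← Finset.sum_add_distrib]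
        refine Finset.sum_congr rfl fun j _ => ?_
        ring
      have e3 := congrArg q e1
      simp only [map_add, map_smul, hqφ, smul_zero, zero_add, map_sum, hψ, map_zero] at e3
      exact Fintype.linearIndependent_iff.1 hbli _ e3 i
    by_contra hai
    apply hz i
    rw [← Module.forall_dual_apply_eq_zero_iff K]
    intro f
    exact (mul_eq_zero.1 (key f)).resolve_left hai
  have h3 := hli.fintype_card_le_finrank
  have h4 := Subspace.finrank_add_finrank_dualAnnihilator_eq D
  omega

theorem RC_avoid {K W : Type*} [Field K] [AddCommGroup W] [Module K W]
    (H H' : Submodule K W) (h : H ≠ ⊤) (h' : H' ≠ ⊤) : ∃ w, w ∉ H ∧ w ∉ H' := by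
  obtain ⟨a, ha⟩ : ∃ a, a ∉ H := by
    by_contra! hc
    exact h (Submodule.eq_top_iff'.2 hc)
  obtain ⟨b, hb⟩ : ∃ b, b ∉ H' := by
    by_contra! hc
    exact h' (Submodule.eq_top_iff'.2 hc)
  by_cases ha' : a ∈ H'
  · by_cases hb' : b ∈ H
    · exact ⟨a + b, fun hc => ha ((Submodule.add_mem_iff_left _ hb').1 hc),
        fun hc => hb ((Submodule.add_mem_iff_right _ ha').1 hc)⟩
    · exact ⟨b, hb', hb⟩
  · exact ⟨a, ha, ha'⟩

theorem RC_exists {K U V : Type*} [Field K]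
    [AddCommGroup U] [Module K U] [FiniteDimensional K U]
    [AddCommGroup V] [Module K V] [FiniteDimensional K V]
    (𝒮 : AffineSubspace K (U →ₗ[K] V)) [Nonempty ↥𝒮]
    (F : ↥𝒮 →ᵃ[K] V)
    (hrc : ∀ s : ↥𝒮, F s ∈ LinearMap.range (s : U →ₗ[K] V))
    (φ : Module.Dual K V) (hφ : φ ∉ RCexc 𝒮.direction 0) :
    ∃ x : U, ∀ s : ↥𝒮, φ (F s) = φ ((s : U →ₗ[K] V) x) := by
  let A : 𝒮.direction →ₗ[K] Module.Dual K U :=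
    (LinearMap.llcomp K U V K φ) ∘ₗ 𝒮.direction.subtype
  have hA : ∀ d u, A d u = φ ((d : U →ₗ[K] V) u) := fun d u => rfl
  have hsurj : LinearMap.range A = ⊤ := by
    by_contra hne
    obtain ⟨g, hg0, hg⟩ := Submodule.exists_le_ker_of_lt_top _ (lt_top_iff_ne_top.2 hne)
    obtain ⟨x, rfl⟩ := (Module.evalEquiv K U).surjective g
    apply hφ
    refine ⟨x, 0, ?_, ?_⟩
    · rintro rfl
      exact hg0 (map_zero _)
    · intro s hs
      have := hg (LinearMap.mem_range_self A ⟨s, hs⟩)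
      rw [LinearMap.mem_ker, Module.evalEquiv_apply, Module.Dual.eval_apply, hA] at this
      simpa using this
  obtain ⟨s1⟩ := ‹Nonempty ↥𝒮›
  obtain ⟨d1, hd1⟩ := LinearMap.range_eq_top.1 hsurj (φ ∘ₗ (s1 : U →ₗ[K] V))
  let s0 : 𝒮 := (-d1) +ᵥ s1
  have hs0 : ∀ u, φ ((s0 : U →ₗ[K] V) u) = 0 := by
    intro u
    have h1 := LinearMap.congr_fun hd1 u
    rw [hA] at h1
    change φ ((((-d1 : 𝒮.direction) : U →ₗ[K] V) + (s1 : U →ₗ[K] V)) u) = 0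
    simp [h1]
  have hz : ∀ s : 𝒮, (∀ u, φ ((s : U →ₗ[K] V) u) = 0) → φ (F s) = 0 := by
    intro s hs
    obtain ⟨u, hu⟩ := hrc s
    rw [← hu, hs]
  have hcoe : ∀ (d : 𝒮.direction) (s : 𝒮) u, ((d +ᵥ s : 𝒮) : U →ₗ[K] V) u
      = (d : U →ₗ[K] V) u + (s : U →ₗ[K] V) u := fun d s u => rfl
  have hker : LinearMap.ker A ≤ LinearMap.ker (φ ∘ₗ F.linear) := by
    intro d hd
    rw [LinearMap.mem_ker] at hd ⊢
    have h1 : φ (F (d +ᵥ s0)) = 0 := by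
      apply hz
      intro u
      rw [hcoe, map_add, hs0, ← hA, hd]
      simp
    rw [AffineMap.map_vadd, vadd_eq_add, map_add, hz s0 hs0, add_zero] at h1
    exact h1
  obtain ⟨g, hg⟩ : ∃ g : Module.Dual K (Module.Dual K U), g ∘ₗ A = φ ∘ₗ F.linear := by
    obtain ⟨r, hr⟩ := A.exists_rightInverse_of_surjective hsurj
    refine ⟨(φ ∘ₗ F.linear) ∘ₗ r, ?_⟩
    ext d
    have h1 : r (A d) - d ∈ LinearMap.ker A := by
      rw [LinearMap.mem_ker, map_sub, sub_eq_zero]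
      exact LinearMap.congr_fun hr (A d)
    have h2 := hker h1
    rw [LinearMap.mem_ker, map_sub, sub_eq_zero] at h2
    exact h2
  obtain ⟨x, rfl⟩ := (Module.evalEquiv K U).surjective g
  refine ⟨x, fun s => ?_⟩
  have hs : s = (s -ᵥ s0) +ᵥ s0 := (vsub_vadd s s0).symm
  rw [hs, hcoe, AffineMap.map_vadd, vadd_eq_add, map_add, map_add, hz s0 hs0, hs0,
    add_zero, add_zero]
  have := LinearMap.congr_fun hg (s -ᵥ s0)
  exact this.symm




/-- Let `K` be an arbitrary field, `U` and `V` finite-dimensional `K`-vector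
spaces, and `𝒮` an affine subspace of `L(U,V)` with `codim 𝒮 ≤ dim V − 2`
(expressed as `dim L(U,V) + 2 ≤ dim 𝒮 + dim V`). Then every range-compatible affine map
`F : 𝒮 → V` is local. -/
theorem range_compatible_affine_map_is_local_of_codim_le_dimV_sub_two
    (K U V : Type*) [Field K]
    [AddCommGroup U] [Module K U] [FiniteDimensional K U]
    [AddCommGroup V] [Module K V] [FiniteDimensional K V]
    (𝒮 : AffineSubspace K (U →ₗ[K] V)) [Nonempty ↥𝒮]
    (hcodim : Module.finrank K (U →ₗ[K] V) + 2 ≤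
      Module.finrank K 𝒮.direction + Module.finrank K V)
    (F : ↥𝒮 →ᵃ[K] V)
    (hrc : ∀ s : ↥𝒮, F s ∈ LinearMap.range (s : U →ₗ[K] V)) :
    ∃ x : U, ∀ s : ↥𝒮, F s = (s : U →ₗ[K] V) x := by
  set D := 𝒮.direction with hD
  have hdir : ∀ (T : (U →ₗ[K] V) →ₗ[K] K), (∀ s : 𝒮, T s = 0) → ∀ d ∈ D, T d = 0 := by
    intro T hT d hd
    obtain ⟨s⟩ := ‹Nonempty ↥𝒮›
    have h1 := hT ⟨d +ᵥ (s : U →ₗ[K] V), AffineSubspace.vadd_mem_of_mem_direction hd s.2⟩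
    simpa [hT s] using h1
  have h0 : ∀ φ, RCexc D 0 ⊆ RCexc D φ := by
    rintro φ ψ ⟨z, y, hz, h⟩
    exact ⟨z, 0, hz, fun s hs => by simpa using h s hs⟩
  have hex := RC_exists 𝒮 F hrc
  choose! X hX using hex
  choose H hHtop hHφ hH using RCexc_span D hcodim
  have agree : ∀ φ, φ ∉ RCexc D 0 → ∀ ψ, ψ ∉ H φ → X ψ = X φ := by
    intro φ hφ ψ hψ
    have hψ0 : ψ ∉ RCexc D 0 := fun hc => hψ (hH φ (h0 φ hc))
    have hs0 : φ + ψ ∉ RCexc D 0 := fun hc =>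
      hψ ((Submodule.add_mem_iff_right _ (hHφ φ)).1 (hH φ (h0 φ hc)))
    have e : ∀ d ∈ D, φ (d (X (φ + ψ) - X φ)) + ψ (d (X (φ + ψ) - X ψ)) = 0 := by
      refine hdir (RCev φ (X (φ + ψ) - X φ) + RCev ψ (X (φ + ψ) - X ψ)) fun s => ?_
      have h1 := hX φ hφ s
      have h2 := hX ψ hψ0 s
      have h3 := hX (φ + ψ) hs0 s
      change φ ((s : U →ₗ[K] V) (X (φ + ψ) - X φ)) + ψ ((s : U →ₗ[K] V) (X (φ + ψ) - X ψ)) = 0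
      simp only [LinearMap.add_apply, map_sub] at h3 ⊢
      linear_combination h1 + h2 - h3
    have e1 : X (φ + ψ) - X ψ = 0 := by
      by_contra hne
      exact hψ (hH φ ⟨_, _, hne, e⟩)
    have e2 : X (φ + ψ) - X φ = 0 := by
      by_contra hne
      refine hφ ⟨_, 0, hne, fun s hs => ?_⟩
      have := e s hs
      rw [e1] at this
      simpa using this
    rw [← sub_eq_zero.1 e1, sub_eq_zero.1 e2]
  have agree2 : ∀ φ ψ, φ ∉ RCexc D 0 → ψ ∉ RCexc D 0 → X φ = X ψ := by
    intro φ ψ hφ hψ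
    obtain ⟨w, hw, hw'⟩ := RC_avoid _ _ (hHtop φ) (hHtop ψ)
    rw [← agree φ hφ w hw, agree ψ hψ w hw']
  obtain ⟨φ₀, hφ₀, -⟩ := RC_avoid _ _ (hHtop 0) (hHtop 0)
  have good : ∀ ψ, ψ ∉ H 0 → ∀ s : 𝒮, ψ (F s) = ψ ((s : U →ₗ[K] V) (X φ₀)) := by
    intro ψ hψ s
    rw [agree2 φ₀ ψ (fun hc => hφ₀ (hH 0 hc)) (fun hc => hψ (hH 0 hc))]
    exact hX ψ (fun hc => hψ (hH 0 hc)) s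
  refine ⟨X φ₀, fun s => ?_⟩
  rw [← sub_eq_zero, ← Module.forall_dual_apply_eq_zero_iff K]
  intro ψ
  rw [map_sub, sub_eq_zero]
  by_cases hψ : ψ ∈ H 0
  · have h1 := good (ψ + φ₀) (fun hc => hφ₀ ((Submodule.add_mem_iff_right _ hψ).1 hc)) s
    have h2 := good φ₀ hφ₀ s
    simp only [LinearMap.add_apply] at h1
    linear_combination h1 - h2
  · exact good ψ hψ s
end

section
/- Let K be a field with more than 2 elements, U and V finite-dimensional K-vector spaces, and 𝒮 an affine subspace of L(U,V) with codim 𝒮 ≤ dim V − 1. Then every range-compatible affine map F : 𝒮 → V is local. -/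
attribute [local instance] AffineSubspace.toAddTorsor

open Module in
/-- the functional `s ↦ φ (s u)` -/
noncomputable def RCaux.T {K U V : Type*} [Field K] [AddCommGroup U] [Module K U]
    [AddCommGroup V] [Module K V] (φ : Dual K V) (u : U) : Dual K (U →ₗ[K] V) :=
  φ ∘ₗ LinearMap.applyₗ u

namespace RCaux
open Module

variable {K U V : Type*} [Field K] [AddCommGroup U] [Module K U]
    [AddCommGroup V] [Module K V]

lemma T_apply (φ : Dual K V) (u : U) (s : U →ₗ[K] V) : T φ u s = φ (s u) := rfl

lemma T_rank1 (φ : Dual K V) (u : U) (η : Dual K U) (v : V) :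
    T φ u (η.smulRight v) = η u * φ v := by
  simp [T_apply]

lemma indep (N : Submodule K (Dual K V)) (φ0 : Dual K V) (h0 : φ0 ∈ N)
    (b : Set (Dual K V)) (hb : LinearIndepOn K N.mkQ b) (α β : Dual K V → U)
    (hβ : ∀ i ∈ b, β i ≠ 0) :
    LinearIndependent K (fun i : b => T φ0 (α i) + T (i : Dual K V) (β i)) := by
  rw [linearIndependent_iff']
  intro s g hg i hi
  have key : ∀ η : Dual K U, g i * η (β i) = 0 := by
    intro η
    have h1 : (∑ j ∈ s, g j * η (α j)) • φ0 +
        ∑ j ∈ s, (g j * η (β j)) • (j : Dual K V) = 0 := by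
      ext v
      have := congrArg (fun p : Dual K (U →ₗ[K] V) => p (η.smulRight v)) hg
      simp only [LinearMap.sum_apply, LinearMap.smul_apply, LinearMap.add_apply, T_rank1,
        LinearMap.zero_apply, smul_eq_mul, mul_add, Finset.sum_add_distrib] at this
      simp only [LinearMap.sum_apply, LinearMap.smul_apply, LinearMap.add_apply,
        LinearMap.zero_apply, smul_eq_mul, Finset.sum_mul]
      rw [← this]
      simp only [mul_assoc]
    have h2 := congrArg N.mkQ h1
    have h3 : N.mkQ φ0 = 0 := by simpa using h0
    rw [map_add, map_smul, h3, smul_zero, zero_add, map_sum, map_zero] at h2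
    simp only [map_smul] at h2
    exact linearIndependent_iff'.1 hb s (fun j => g j * η (β j)) h2 i hi
  by_contra hne
  apply hβ i i.2
  rw [← Module.forall_dual_apply_eq_zero_iff K]
  intro η
  exact (mul_eq_zero.1 (key η)).resolve_left hne

lemma coeff0 (N : Submodule K (Dual K V)) (φ0 : Dual K V) (h0 : φ0 ∈ N)
    (b : Set (Dual K V)) [Fintype b] (hb : LinearIndepOn K N.mkQ b) (a : U) (β : b → U)
    (h : T φ0 a + ∑ i : b, T (i : Dual K V) (β i) = 0) (i : b) : β i = 0 := by
  rw [← Module.forall_dual_apply_eq_zero_iff K]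
  intro η
  have h1 : η a • φ0 + ∑ j : b, η (β j) • (j : Dual K V) = 0 := by
    ext v
    have := congrArg (fun p : Dual K (U →ₗ[K] V) => p (η.smulRight v)) h
    simp only [LinearMap.sum_apply, LinearMap.add_apply, T_rank1, LinearMap.zero_apply] at this
    simpa only [LinearMap.sum_apply, LinearMap.smul_apply, LinearMap.add_apply,
        LinearMap.zero_apply, smul_eq_mul] using this
  have h2 := congrArg N.mkQ h1
  have h3 : N.mkQ φ0 = 0 := by simpa using h0
  rw [map_add, map_smul, h3, smul_zero, zero_add, map_sum, map_zero] at h2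
  simp only [map_smul] at h2
  exact linearIndependent_iff'.1 hb Finset.univ (fun j => η (β j)) h2 i (Finset.mem_univ _)

lemma T_add_right (φ : Dual K V) (u v : U) : T φ (u + v) = T φ u + T φ v := by
  ext s; simp [T_apply]
lemma T_sub_right (φ : Dual K V) (u v : U) : T φ (u - v) = T φ u - T φ v := by
  ext s; simp [T_apply]
lemma T_smul_right (φ : Dual K V) (c : K) (u : U) : T φ (c • u) = c • T φ u := by
  ext s; simp [T_apply]
lemma T_sum_right {ι : Type*} (s : Finset ι) (φ : Dual K V) (u : ι → U) :
    T φ (∑ i ∈ s, u i) = ∑ i ∈ s, T φ (u i) := by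
  ext s; simp [T_apply]
lemma T_comb (φ ψ : Dual K V) (c : K) (u : U) : T (c • φ + ψ) u = T φ (c • u) + T ψ u := by
  ext s; simp [T_apply]

lemma pair_zero (φ ψ : Dual K V) (hψ : ψ ∉ Submodule.span K {φ}) (hφ : φ ≠ 0)
    (a b : U) (h : T φ a + T ψ b = 0) : a = 0 ∧ b = 0 := by
  have h1 : ∀ η : Dual K U, η a • φ + η b • ψ = 0 := by
    intro η
    ext v
    have := congrArg (fun p : Dual K (U →ₗ[K] V) => p (η.smulRight v)) h
    simpa [T_rank1] using this
  have hb : b = 0 := by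
    rw [← Module.forall_dual_apply_eq_zero_iff K]
    intro η
    by_contra hne
    apply hψ
    rw [Submodule.mem_span_singleton]
    refine ⟨-(η b)⁻¹ * η a, ?_⟩
    have h2 : η a • φ = - (η b • ψ) := eq_neg_of_add_eq_zero_left (h1 η)
    rw [mul_smul, h2, smul_neg, neg_smul, neg_neg, smul_smul, inv_mul_cancel₀ hne, one_smul]
  refine ⟨?_, hb⟩
  rw [← Module.forall_dual_apply_eq_zero_iff K]
  intro η
  have := h1 η
  rw [hb, map_zero, zero_smul, add_zero] at this
  exact (smul_eq_zero.1 this).resolve_right hφ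

/-- basis extraction -/
lemma extract [FiniteDimensional K V] (N : Submodule K (Dual K V))
    (s B : Set (Dual K V)) (hs : LinearIndepOn K N.mkQ s) (hsB : s ⊆ B)
    (hspan : Submodule.span K (N.mkQ '' B) = ⊤) :
    ∃ b ⊆ B, s ⊆ b ∧ LinearIndepOn K N.mkQ b ∧ ∃ _ : Fintype b,
      Fintype.card b + finrank K N = finrank K V := by
  obtain ⟨b, hbB, hsb, hsp, hli⟩ := exists_linearIndepOn_extension hs hsB
  refine ⟨b, hbB, hsb, hli, ?_⟩
  have hfin : Finite b := LinearIndependent.finite hli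
  let _ : Fintype b := Fintype.ofFinite b
  refine ⟨inferInstance, ?_⟩
  have h1 : Submodule.span K (N.mkQ '' b) = ⊤ := by
    rw [eq_top_iff, ← hspan]
    exact Submodule.span_le.2 hsp
  have h2 := finrank_span_eq_card (R := K) (b := fun i : b => N.mkQ i) hli
  have h3 : Set.range (fun i : b => N.mkQ i) = N.mkQ '' b := by
    ext z; simp
  rw [h3, h1, finrank_top] at h2
  rw [← h2, Submodule.finrank_quotient_add_finrank, Subspace.dual_finrank_eq]

lemma card_le [FiniteDimensional K U] [FiniteDimensional K V]
    (P : Submodule K (Dual K (U →ₗ[K] V)))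
    (b : Set (Dual K V)) [Fintype b] (p : b → Dual K (U →ₗ[K] V))
    (hp : LinearIndependent K p) (hP : ∀ i, p i ∈ P) :
    Fintype.card b ≤ finrank K P := by
  rw [← finrank_span_eq_card hp]
  apply Submodule.finrank_mono
  rw [Submodule.span_le]
  rintro _ ⟨i, rfl⟩
  exact hP i

/-- bad functionals lie in a hyperplane -/
lemma exists_f [FiniteDimensional K U] [FiniteDimensional K V]
    (P : Submodule K (Dual K (U →ₗ[K] V))) (hP : finrank K P + 1 ≤ finrank K V) :
    ∃ f : Dual K V →ₗ[K] K, f ≠ 0 ∧ ∀ φ u, T φ u ∈ P → u ≠ 0 → f φ = 0 := by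
  let B : Set (Dual K V) := {φ | ∃ u : U, u ≠ 0 ∧ T φ u ∈ P}
  have hB : Submodule.span K B < ⊤ := by
    rw [lt_top_iff_ne_top]
    intro htop
    obtain ⟨b, hbB, -, hli, hft, hcard⟩ := extract (⊥ : Submodule K (Dual K V)) ∅ B
      (linearIndepOn_empty K _) (Set.empty_subset _) (by
        rw [← Submodule.map_span, htop, Submodule.map_top, Submodule.range_mkQ])
    have hex : ∀ φ : Dual K V, ∃ u : U, φ ∈ B → u ≠ 0 ∧ T φ u ∈ P := by
      intro φ
      by_cases h : φ ∈ B
      · obtain ⟨u, hu⟩ := h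
        exact ⟨u, fun _ => hu⟩
      · exact ⟨0, fun h' => absurd h' h⟩
    choose β hβ using hex
    have hli2 := indep ⊥ 0 (Submodule.zero_mem _) b hli (fun _ => (0 : U)) β
      (fun i hi => (hβ i (hbB hi)).1)
    have := card_le P b _ hli2 (fun i => by
      have : T (0 : Dual K V) (0 : U) = 0 := by ext s; simp [T_apply]
      rw [this, zero_add]
      exact (hβ i (hbB i.2)).2)
    rw [finrank_bot] at hcard
    omega
  obtain ⟨f, hf, hle⟩ := Submodule.exists_le_ker_of_lt_top _ hB
  exact ⟨f, hf, fun φ u h hu => hle (Submodule.subset_span ⟨u, hu, h⟩)⟩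

/-- surjectivity for good functionals -/
lemma surj [FiniteDimensional K U] (D : Submodule K (U →ₗ[K] V)) (φ : Dual K V)
    (hgood : ∀ u, T φ u ∈ D.dualAnnihilator → u = 0) (χ : Dual K U) :
    ∃ t ∈ D, φ ∘ₗ t = χ := by
  let g : (U →ₗ[K] V) →ₗ[K] Dual K U := LinearMap.compRight K φ
  have h1 : D.map g = ⊤ := by
    rw [← Subspace.dualCoannihilator_dualAnnihilator_eq (W := D.map g)]
    have : (D.map g).dualCoannihilator = ⊥ := by
      rw [eq_bot_iff]
      intro u hu
      rw [Submodule.mem_dualCoannihilator] at hu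
      refine hgood u ?_
      rw [Submodule.mem_dualAnnihilator]
      intro t ht
      exact hu _ (Submodule.mem_map_of_mem ht)
    rw [this, Submodule.dualAnnihilator_bot]
  have : χ ∈ D.map g := h1 ▸ Submodule.mem_top
  obtain ⟨t, ht, rfl⟩ := this
  exact ⟨t, ht, rfl⟩

lemma exX [FiniteDimensional K U] (𝒮 : AffineSubspace K (U →ₗ[K] V)) [Nonempty ↥𝒮]
    (F : ↥𝒮 →ᵃ[K] V)
    (hrc : ∀ s : ↥𝒮, F s ∈ LinearMap.range (s : U →ₗ[K] V))
    (φ : Dual K V) (s1 : ↥𝒮) (h1 : φ ∘ₗ (s1 : U →ₗ[K] V) = 0) :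
    ∃ x : U, ∀ s : ↥𝒮, φ (F s) = φ ((s : U →ₗ[K] V) x) := by
  let g : 𝒮.direction →ₗ[K] Dual K U := LinearMap.compRight K φ ∘ₗ 𝒮.direction.subtype
  have hz : ∀ s : ↥𝒮, φ ∘ₗ (s : U →ₗ[K] V) = 0 → φ (F s) = 0 := by
    intro s hs
    obtain ⟨u, hu⟩ := hrc s
    rw [← hu]
    exact LinearMap.congr_fun hs u
  have hv : ∀ t : 𝒮.direction, φ (F (t +ᵥ s1)) = φ (F.linear t) := by
    intro t
    rw [AffineMap.map_vadd, vadd_eq_add, map_add, hz s1 h1, add_zero]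
  have hc : ∀ t : 𝒮.direction,
      ((t +ᵥ s1 : ↥𝒮) : U →ₗ[K] V) = (t : U →ₗ[K] V) + (s1 : U →ₗ[K] V) := fun t => rfl
  have hmem : (φ ∘ₗ F.linear) ∈ (LinearMap.ker g).dualAnnihilator := by
    rw [Submodule.mem_dualAnnihilator]
    intro t ht
    have ht' : φ ∘ₗ (t : U →ₗ[K] V) = 0 := ht
    have := hz (t +ᵥ s1) (by rw [hc, LinearMap.comp_add, ht', h1, add_zero])
    rw [hv] at this
    exact this
  rw [← LinearMap.range_dualMap_eq_dualAnnihilator_ker] at hmem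
  obtain ⟨h, hh⟩ := hmem
  refine ⟨(evalEquiv K U).symm h, fun s => ?_⟩
  obtain ⟨t, rfl⟩ : ∃ t : 𝒮.direction, t +ᵥ s1 = s := ⟨s -ᵥ s1, vsub_vadd s s1⟩
  rw [hv, hc]
  have e1 := LinearMap.congr_fun hh t
  have e2 : ∀ χ : Dual K U, χ ((evalEquiv K U).symm h) = h χ := by
    intro χ
    have := LinearMap.congr_fun ((evalEquiv K U).apply_symm_apply h) χ
    simpa using this
  have e3 : φ ((s1 : U →ₗ[K] V) ((evalEquiv K U).symm h)) = 0 := LinearMap.congr_fun h1 _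
  rw [LinearMap.add_apply, map_add, e3, add_zero]
  have e4 := e2 (g t)
  change φ ((t : U →ₗ[K] V) ((evalEquiv K U).symm h)) = h (g t) at e4
  rw [e4]
  exact e1.symm

/-- spanning modulo `φ1` -/
lemma span_mod (c' : K) (hc0 : c' ≠ 0) (hc1 : c' ≠ 1) (φ1 : Dual K V) (f : Dual K V →ₗ[K] K)
    (hf1 : f φ1 ≠ 0)
    (E : Submodule K (Dual K V)) (hE : E ≠ ⊤) (h1E : φ1 ∈ E)  :
    Submodule.span K ((Submodule.span K {φ1}).mkQ '' {ψ | f ψ ≠ 0 ∧ ψ ∉ E}) = ⊤ := by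
  set N := Submodule.span K {φ1}
  set W := Submodule.span K (N.mkQ '' {ψ | f ψ ≠ 0 ∧ ψ ∉ E}) with hW
  have hq : N.mkQ φ1 = 0 := by
    simp [N, Submodule.mem_span_singleton_self]
  have hA : ∀ χ, χ ∉ E → N.mkQ χ ∈ W := by
    intro χ hχ
    obtain ⟨t, ht0, ht⟩ : ∃ t : K, t ≠ 0 ∧ f (φ1 + t • χ) ≠ 0 := by
      by_contra hcon
      push Not at hcon
      have e1 := hcon 1 one_ne_zero
      have e2 := hcon c' hc0
      simp only [map_add, map_smul, smul_eq_mul, one_mul] at e1 e2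
      have e3 : (1 - c') * f χ = 0 := by linear_combination e1 - e2
      have e4 : f χ = 0 := (mul_eq_zero.1 e3).resolve_left (sub_ne_zero.2 (Ne.symm hc1))
      rw [e4, add_zero] at e1
      exact hf1 e1
    have hm : N.mkQ (φ1 + t • χ) ∈ W := by
      refine Submodule.subset_span ⟨_, ⟨ht, ?_⟩, rfl⟩
      intro hmem
      have := (Submodule.add_mem_iff_right E h1E).1 hmem
      exact hχ ((Submodule.smul_mem_iff E ht0).1 this)
    rw [map_add, hq, zero_add, map_smul] at hm
    exact (Submodule.smul_mem_iff W ht0).1 hm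
  obtain ⟨χ, hχ⟩ : ∃ χ, χ ∉ E := by
    by_contra hcon
    push Not at hcon
    exact hE (eq_top_iff.2 fun x _ => hcon x)
  rw [eq_top_iff]
  rintro z -
  obtain ⟨z, rfl⟩ := N.mkQ_surjective z
  by_cases hz : z ∈ E
  · have h1 : z + χ ∉ E := fun h => hχ ((Submodule.add_mem_iff_right E hz).1 h)
    have := W.sub_mem (hA _ h1) (hA _ hχ)
    rwa [← map_sub, add_sub_cancel_right] at this
  · exact hA z hz

/-- the subspace of functionals `φ` with `φ ∘ F` represented by `x` -/
def ES (𝒮 : AffineSubspace K (U →ₗ[K] V)) [Nonempty ↥𝒮]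
    (F : ↥𝒮 → V) (x : U) : Submodule K (Dual K V) where
  carrier := {φ | ∀ s : ↥𝒮, φ (F s) = φ ((s : U →ₗ[K] V) x)}
  add_mem' := by
    intro a b ha hb s
    simp [ha s, hb s]
  zero_mem' := by intro s; simp
  smul_mem' := by
    intro c a ha s
    simp [ha s]

lemma rel (𝒮 : AffineSubspace K (U →ₗ[K] V)) [Nonempty ↥𝒮]
    (F : ↥𝒮 → V) (p q r : U) (φ ψ : Dual K V) (c : K)
    (hp : φ ∈ ES 𝒮 F p) (hq : ψ ∈ ES 𝒮 F q) (hr : φ + c • ψ ∈ ES 𝒮 F r) (s : ↥𝒮) :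
    (T φ (p - r) + T ψ (c • (q - r))) (s : U →ₗ[K] V) = 0 := by
  have h1 := hp s
  have h2 := hq s
  have h3 := hr s
  simp only [LinearMap.add_apply, LinearMap.smul_apply, smul_eq_mul] at h3
  simp only [LinearMap.add_apply, T_apply, map_sub, map_smul, smul_eq_mul]
  linear_combination h3 - h1 - c * h2

lemma main [FiniteDimensional K U] [FiniteDimensional K V]
    (c' : K) (hc0 : c' ≠ 0) (hc1 : c' ≠ 1)
    (𝒮 : AffineSubspace K (U →ₗ[K] V)) [Nonempty ↥𝒮]
    (hcodim : Module.finrank K (U →ₗ[K] V) + 1 ≤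
      Module.finrank K 𝒮.direction + Module.finrank K V)
    (F : ↥𝒮 →ᵃ[K] V)
    (hrc : ∀ s : ↥𝒮, F s ∈ LinearMap.range (s : U →ₗ[K] V)) :
    ∃ x : U, ∀ s : ↥𝒮, F s = (s : U →ₗ[K] V) x := by
  set P := 𝒮.direction.dualAnnihilator with hPdef
  have hPdim : finrank K P + 1 ≤ finrank K V := by
    have := Subspace.finrank_add_finrank_dualAnnihilator_eq 𝒮.direction
    rw [hPdef]
    omega
  obtain ⟨f, hf, hbad⟩ := exists_f P hPdim
  obtain ⟨φ1, hφ1⟩ : ∃ φ1, f φ1 ≠ 0 := by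
    by_contra hcon
    push Not at hcon
    exact hf (LinearMap.ext hcon)
  have hgood : ∀ φ, f φ ≠ 0 → ∀ u, T φ u ∈ P → u = 0 := by
    intro φ hφ u hu
    by_contra hne
    exact hφ (hbad φ u hu hne)
  have hexG : ∀ φ, f φ ≠ 0 → ∃ x, φ ∈ ES 𝒮 F x := by
    intro φ hφ
    obtain ⟨s0⟩ := ‹Nonempty ↥𝒮›
    obtain ⟨t, ht, htφ⟩ := surj 𝒮.direction φ (hgood φ hφ) (-(φ ∘ₗ (s0 : U →ₗ[K] V)))
    refine exX 𝒮 F hrc φ ((⟨t, ht⟩ : 𝒮.direction) +ᵥ s0) ?_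
    change φ ∘ₗ (t + (s0 : U →ₗ[K] V)) = 0
    rw [LinearMap.comp_add, htφ, neg_add_cancel]
  have huniq : ∀ φ, f φ ≠ 0 → ∀ x x', φ ∈ ES 𝒮 F x → φ ∈ ES 𝒮 F x' → x = x' := by
    intro φ hφ x x' hx hx'
    rw [← sub_eq_zero]
    apply hgood φ hφ
    rw [hPdef, Submodule.mem_dualAnnihilator]
    intro t ht
    obtain ⟨s0⟩ := ‹Nonempty ↥𝒮›
    have e : ∀ s : ↥𝒮, φ ((s : U →ₗ[K] V) (x - x')) = 0 := by
      intro s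
      rw [map_sub, map_sub, ← hx s, ← hx' s, sub_self]
    have e1 := e s0
    have e2 : φ ((t + (s0 : U →ₗ[K] V)) (x - x')) = 0 := e ((⟨t, ht⟩ : 𝒮.direction) +ᵥ s0)
    rw [LinearMap.add_apply, map_add, e1, add_zero] at e2
    exact e2
  obtain ⟨x1, hx1⟩ := hexG φ1 hφ1
  refine ⟨x1, ?_⟩
  suffices hE : ES 𝒮 F x1 = ⊤ by
    intro s
    rw [← sub_eq_zero, ← Module.forall_dual_apply_eq_zero_iff K]
    intro φ
    have : φ ∈ ES 𝒮 F x1 := hE ▸ Submodule.mem_top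
    rw [map_sub, this s, sub_self]
  by_contra hE
  have hne0 : φ1 ≠ 0 := by
    rintro rfl
    simp at hφ1
  have hN1 : finrank K (Submodule.span K {φ1}) = 1 := finrank_span_singleton hne0
  have hspan := span_mod c' hc0 hc1 φ1 f hφ1 _ hE hx1
  have hself : φ1 ∈ Submodule.span K {φ1} := Submodule.mem_span_singleton_self _
  -- nonvanishing of the second coefficient
  have hbne : ∀ (ψ : Dual K V) (c : K) (q r : U), ψ ∉ ES 𝒮 F x1 → ψ ∈ ES 𝒮 F q →
      φ1 + c • ψ ∈ ES 𝒮 F r → q - r ≠ 0 := by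
    intro ψ c q r hψ hq hr h
    obtain rfl := sub_eq_zero.1 h
    have h1 : φ1 ∈ ES 𝒮 F q :=
      (Submodule.add_mem_iff_left _ (Submodule.smul_mem _ c hq)).1 hr
    obtain rfl := huniq φ1 hφ1 _ _ hx1 h1
    exact hψ hq
  by_cases h0 : (0 : U →ₗ[K] V) ∈ 𝒮
  · -- linear case
    have hex : ∀ φ, ∃ x, φ ∈ ES 𝒮 F x := fun φ =>
      exX 𝒮 F hrc φ ⟨0, h0⟩ (LinearMap.comp_zero _)
    choose X hX using hex
    have hmemP : ∀ p : Dual K (U →ₗ[K] V), (∀ s : ↥𝒮, p (s : U →ₗ[K] V) = 0) → p ∈ P := by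
      intro p hp
      rw [hPdef, Submodule.mem_dualAnnihilator]
      intro t ht
      have : t ∈ 𝒮 := by
        have := AffineSubspace.vadd_mem_of_mem_direction ht h0
        simpa using this
      exact hp ⟨t, this⟩
    obtain ⟨ψ, hψE, hψf⟩ : ∃ ψ, ψ ∉ ES 𝒮 F x1 ∧ f ψ = 0 := by
      by_contra hcon
      push Not at hcon
      apply hE
      rw [eq_top_iff]
      rintro χ -
      by_contra hχ
      refine hcon (χ - (f χ / f φ1) • φ1) ?_ ?_
      · intro h
        exact hχ ((Submodule.sub_mem_iff_left _ (Submodule.smul_mem _ _ hx1)).1 h)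
      · rw [map_sub, map_smul, smul_eq_mul, div_mul_cancel₀ _ hφ1, sub_self]
    have hψN : ψ ∉ Submodule.span K {φ1} := by
      intro h
      exact hψE ((Submodule.span_singleton_le_iff_mem _ _).2 hx1 h)
    have hspan2 : Submodule.span K ((Submodule.span K {φ1}).mkQ ''
        {χ | χ ∉ ES 𝒮 F x1}) = ⊤ := by
      rw [eq_top_iff, ← hspan]
      exact Submodule.span_mono (Set.image_mono fun χ h => h.2)
    obtain ⟨b, hbB, hψb, hli, hft, hcard⟩ := extract (Submodule.span K {φ1}) {ψ} _
      (by
        rw [linearIndepOn_singleton_iff]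
        simpa using hψN) (Set.singleton_subset_iff.2 hψE) hspan2
    have hψb : ψ ∈ b := hψb rfl
    have hX1 : ∀ χ, φ1 + (1 : K) • χ ∈ ES 𝒮 F (X (φ1 + χ)) := by
      intro χ
      rw [one_smul]
      exact hX _
    have hli2 := indep _ φ1 hself b hli (fun χ => x1 - X (φ1 + χ))
      (fun χ => (1 : K) • (X χ - X (φ1 + χ)))
      (fun χ hχ => by
        rw [one_smul]
        exact hbne χ 1 _ _ (hbB hχ) (hX χ) (hX1 χ))
    set pf : b → Dual K (U →ₗ[K] V) := fun i =>
      T φ1 (x1 - X (φ1 + i)) + T (i : Dual K V) ((1 : K) • (X i - X (φ1 + i))) with hpf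
    have hpP : ∀ i, pf i ∈ P := fun i =>
      hmemP _ (rel 𝒮 F _ _ _ φ1 i 1 hx1 (hX i) (hX1 i))
    have hsp : Submodule.span K (Set.range pf) = P := by
      apply Submodule.eq_of_le_of_finrank_le
      · rw [Submodule.span_le]
        rintro _ ⟨i, rfl⟩
        exact hpP i
      · rw [finrank_span_eq_card hli2]
        omega
    set r := X (φ1 + ψ) with hr
    set r' := X (φ1 + c' • ψ) with hr'
    have hp' : T φ1 (x1 - r') + T ψ (c' • (X ψ - r')) ∈ P :=
      hmemP _ (rel 𝒮 F _ _ _ φ1 ψ c' hx1 (hX ψ) (hX _))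
    rw [← hsp, Submodule.mem_span_range_iff_exists_fun] at hp'
    obtain ⟨d, hd⟩ := hp'
    classical
    have hdz : ∀ i : b, i ≠ ⟨ψ, hψb⟩ → d i = 0 := by
      intro i hi
      have hz := coeff0 _ φ1 hself b hli
        ((∑ j : b, d j • (x1 - X (φ1 + j))) - (x1 - r'))
        (fun j => d j • ((1 : K) • (X j - X (φ1 + j))) -
          (if j = ⟨ψ, hψb⟩ then c' • (X ψ - r') else 0)) (by
          have e1 : ∀ j : b, T (j : Dual K V)
              (if j = ⟨ψ, hψb⟩ then c' • (X ψ - r') else 0) =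
              if j = ⟨ψ, hψb⟩ then T ψ (c' • (X ψ - r')) else 0 := by
            intro j
            split_ifs with hj
            · rw [hj]
            · ext s; simp [T_apply]
          simp only [T_sub_right _ (_ • _ : U) (ite _ _ _), T_sub_right _ (Finset.sum _ _) _, e1,
            T_sum_right, Finset.sum_sub_distrib, Finset.sum_ite_eq', Finset.sum_ite_eq,
            Finset.mem_univ, if_true]
          rw [← sub_eq_zero] at hd
          simp only [hpf, smul_add, Finset.sum_add_distrib, ← T_smul_right] at hd
          rw [← hd]
          abel) i
      simp only [if_neg hi, sub_zero, one_smul] at hz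
      refine (smul_eq_zero.1 hz).resolve_right ?_
      exact hbne i 1 _ _ (hbB i.2) (hX i) (hX1 i)
    rw [Fintype.sum_eq_single (⟨ψ, hψb⟩ : b) (fun i hi => by rw [hdz i hi, zero_smul])] at hd
    set l := d ⟨ψ, hψb⟩ with hl
    simp only [hpf, one_smul] at hd
    rw [← hr] at hd
    have hpz := pair_zero φ1 ψ hψN hne0 (l • (x1 - r) - (x1 - r'))
      (l • (X ψ - r) - c' • (X ψ - r')) (by
        rw [T_sub_right, T_sub_right _ (l • (X ψ - r)), T_smul_right, T_smul_right _ l (X ψ - r)]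
        rw [← sub_eq_zero, smul_add] at hd
        rw [← hd]
        abel)
    obtain ⟨hz1, hz2⟩ := hpz
    have hb0 : X ψ - r ≠ 0 := hbne ψ 1 _ _ hψE (hX ψ) (hX1 ψ)
    have hrel : (c' * (1 - l)) • (x1 - r) = (c' - l) • (X ψ - r) := by
      linear_combination (norm := module) (-c') • hz1 + hz2
    have hl1 : l ≠ 1 := by
      intro h
      rw [h, sub_self, mul_zero, zero_smul] at hrel
      rcases smul_eq_zero.1 hrel.symm with h' | h'
      · exact hc1 (sub_eq_zero.1 h')
      · exact hb0 h'
    have hm0 : c' * (1 - l) ≠ 0 := mul_ne_zero hc0 (sub_ne_zero.2 (Ne.symm hl1))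
    obtain ⟨k, hk⟩ : ∃ k : K, x1 - r = k • (X ψ - r) := by
      refine ⟨(c' * (1 - l))⁻¹ * (c' - l), ?_⟩
      rw [mul_smul, ← hrel, smul_smul, inv_mul_cancel₀ hm0, one_smul]
    have hpψ := hpP ⟨ψ, hψb⟩
    simp only [hpf, one_smul] at hpψ
    rw [← hr, hk, ← T_comb] at hpψ
    have hfk := hbad _ _ hpψ hb0
    rw [map_add, map_smul, hψf, add_zero, smul_eq_mul] at hfk
    have hk0 : k = 0 := (mul_eq_zero.1 hfk).resolve_right hφ1
    rw [hk0, zero_smul, sub_eq_zero] at hk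
    have hfin := hX1 ψ
    rw [one_smul, ← hr, ← hk] at hfin
    exact hψE ((Submodule.add_mem_iff_right _ hx1).1 hfin)
  · -- affine case
    let P0 : Submodule K (Dual K (U →ₗ[K] V)) :=
      (Submodule.span K (𝒮 : Set (U →ₗ[K] V))).dualAnnihilator
    have hP0 : finrank K P0 + 2 ≤ finrank K V := by
      have h1 := Subspace.finrank_add_finrank_dualAnnihilator_eq
        (Submodule.span K (𝒮 : Set (U →ₗ[K] V)))
      have h2 : 𝒮.direction < Submodule.span K (𝒮 : Set (U →ₗ[K] V)) := by
        obtain ⟨s0⟩ := ‹Nonempty ↥𝒮›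
        refine lt_of_le_of_ne ?_ ?_
        · intro t ht
          have h3 := AffineSubspace.vadd_mem_of_mem_direction ht s0.2
          have h4 := Submodule.sub_mem _
            (Submodule.subset_span (R := K) (s := (𝒮 : Set (U →ₗ[K] V))) h3)
            (Submodule.subset_span s0.2)
          simpa using h4
        · intro heq
          have h3 : (s0 : U →ₗ[K] V) ∈ 𝒮.direction := by
            rw [heq]
            exact Submodule.subset_span s0.2
          have h4 := AffineSubspace.vadd_mem_of_mem_direction
            (Submodule.neg_mem _ h3) s0.2
          apply h0
          simpa using h4
      have h3 := Submodule.finrank_lt_finrank_of_lt h2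
      change _ + finrank K P0 = _ at h1
      omega
    obtain ⟨b, hbB, -, hli, hft, hcard⟩ := extract (Submodule.span K {φ1}) ∅ _
      (linearIndepOn_empty K _) (Set.empty_subset _) hspan
    have hex : ∀ ψ : Dual K V, ∃ α β : U, (f ψ ≠ 0 ∧ ψ ∉ ES 𝒮 F x1) →
        β ≠ 0 ∧ T φ1 α + T ψ β ∈ P0 := by
      intro ψ
      by_cases h : f ψ ≠ 0 ∧ ψ ∉ ES 𝒮 F x1
      · obtain ⟨t, ht0, ht⟩ : ∃ t : K, t ≠ 0 ∧ f (φ1 + t • ψ) ≠ 0 := by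
          by_contra hcon
          push Not at hcon
          have e1 := hcon 1 one_ne_zero
          have e2 := hcon c' hc0
          simp only [map_add, map_smul, smul_eq_mul, one_mul] at e1 e2
          have e3 : (1 - c') * f ψ = 0 := by linear_combination e1 - e2
          exact h.1 ((mul_eq_zero.1 e3).resolve_left (sub_ne_zero.2 (Ne.symm hc1)))
        obtain ⟨q, hq⟩ := hexG ψ h.1
        obtain ⟨r, hr⟩ := hexG _ ht
        refine ⟨x1 - r, t • (q - r), fun _ =>
          ⟨smul_ne_zero ht0 (hbne ψ t q r h.2 hq hr), ?_⟩⟩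
        change _ ∈ (Submodule.span K (𝒮 : Set (U →ₗ[K] V))).dualAnnihilator
        have hle : Submodule.span K (𝒮 : Set (U →ₗ[K] V)) ≤
            LinearMap.ker (T φ1 (x1 - r) + T ψ (t • (q - r))) := by
          rw [Submodule.span_le]
          intro s hs
          exact rel 𝒮 F x1 q r φ1 ψ t hx1 hq hr ⟨s, hs⟩
        rw [Submodule.mem_dualAnnihilator]
        intro w hw
        exact hle hw
      · exact ⟨0, 0, fun h' => absurd h' h⟩
    choose α β hαβ using hex
    have hli2 := indep _ φ1 hself b hli α β (fun i hi => (hαβ i (hbB hi)).1)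
    have := card_le P0 b _ hli2 (fun i => (hαβ i (hbB i.2)).2)
    omega

end RCaux




/-- Let `K` be a field with more than 2 elements, `U` and `V`
finite-dimensional `K`-vector spaces, and `𝒮` an affine subspace of `L(U,V)` with
`codim 𝒮 ≤ dim V − 1` (expressed as `dim L(U,V) + 1 ≤ dim 𝒮 + dim V`). Then every
range-compatible affine map `F : 𝒮 → V` is local. -/
theorem range_compatible_affine_map_is_local_of_codim_le_dimV_sub_one
    (K U V : Type*) [Field K] (hK : 2 < Cardinal.mk K)
    [AddCommGroup U] [Module K U] [FiniteDimensional K U]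
    [AddCommGroup V] [Module K V] [FiniteDimensional K V]
    (𝒮 : AffineSubspace K (U →ₗ[K] V)) [Nonempty ↥𝒮]
    (hcodim : Module.finrank K (U →ₗ[K] V) + 1 ≤
      Module.finrank K 𝒮.direction + Module.finrank K V)
    (F : ↥𝒮 →ᵃ[K] V)
    (hrc : ∀ s : ↥𝒮, F s ∈ LinearMap.range (s : U →ₗ[K] V)) :
    ∃ x : U, ∀ s : ↥𝒮, F s = (s : U →ₗ[K] V) x := by
  have h3 : 3 ≤ Cardinal.mk K := by
    have := (Cardinal.natCast_add_one_le_iff (n := 2) (c := Cardinal.mk K)).2 (by exact_mod_cast hK)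
    convert this using 1
    norm_num
  obtain ⟨c, hc0, hc1⟩ := Cardinal.exists_ne_ne_of_three_le h3 0 1
  exact RCaux.main c hc0 hc1 𝒮 hcodim F hrc
end

section
/- Let 𝒮 be an affine subspace of L(U,V) with codim 𝒮 ≤ dim V − 1, let F : 𝒮 → V be a range-compatible affine map, let S be the translation vector space of 𝒮 and F⃗ : S → V the linear part of F. Then: (a) for every 1-dimensional linear subspace D of V that is contained in the kernel of every rank-1 operator of S⊥, and for every rank-1 operator t ∈ S with range(t) ≠ D, one has F⃗(t) ∈ range(t); (b) there exists a 1-dimensional linear subspace D of V contained in the kernel of every rank-1 operator of S⊥; (c) if codim 𝒮 < dim V − 1, then F⃗(t) ∈ range(t) for every rank-1 operator t ∈ S. -/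
theorem aux_trace {K U V : Type*} [Field K]
    [AddCommGroup U] [Module K U] [FiniteDimensional K U]
    [AddCommGroup V] [Module K V]
    (ψ : V →ₗ[K] K) (u : U) (s : U →ₗ[K] V) :
    LinearMap.trace K U ((ψ.smulRight u) ∘ₗ s) = ψ (s u) := by
  have : (ψ.smulRight u) ∘ₗ s = (ψ ∘ₗ s).smulRight u := by ext; simp
  rw [this, LinearMap.trace_smulRight]; simp

theorem aux_zero {K U V : Type*} [Field K]
    [AddCommGroup U] [Module K U] [FiniteDimensional K U]
    [AddCommGroup V] [Module K V]
    (S : Submodule K (U →ₗ[K] V)) (d : V)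
    (h : ∀ t : V →ₗ[K] U, (∀ s ∈ S, LinearMap.trace K U (t ∘ₗ s) = 0) →
        Module.finrank K (LinearMap.range t) = 1 → t d = 0)
    (ψ : V →ₗ[K] K) (hψ : ψ d ≠ 0) (g : U →ₗ[K] K) : ∃ s ∈ S, ψ ∘ₗ s = g := by
  let A : (U →ₗ[K] V) →ₗ[K] (U →ₗ[K] K) := LinearMap.compRight K ψ
  have hA : S.map A = ⊤ := by
    by_contra hne
    obtain ⟨f, hf, hle⟩ := Submodule.exists_le_ker_of_lt_top _ (lt_top_iff_ne_top.2 hne)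
    obtain ⟨u, rfl⟩ := (Module.evalEquiv K U).surjective f
    have hu : u ≠ 0 := by rintro rfl; simp at hf
    have h1 := h (ψ.smulRight u) (fun s hs => by
      rw [aux_trace]
      exact hle (Submodule.mem_map_of_mem hs)) (by
        have : LinearMap.range (ψ.smulRight u) = Submodule.span K {u} := by
          apply le_antisymm
          · rintro _ ⟨v, rfl⟩
            exact Submodule.smul_mem _ _ (Submodule.mem_span_singleton_self u)
          · rw [Submodule.span_singleton_le_iff_mem]
            exact ⟨(ψ d)⁻¹ • d, by simp [hψ]⟩
        rw [this, finrank_span_singleton hu])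
    simp [hψ, hu] at h1
  have : g ∈ S.map A := hA ▸ Submodule.mem_top
  obtain ⟨s, hs, e⟩ := this
  exact ⟨s, hs, e⟩

theorem aux_ker {K U V : Type*} [Field K]
    [AddCommGroup U] [Module K U] [AddCommGroup V] [Module K V]
    (t : V →ₗ[K] U) (ht : Module.finrank K (LinearMap.range t) = 1) :
    ∃ ψ : V →ₗ[K] K, LinearMap.ker ψ ≤ LinearMap.ker t := by
  have : FiniteDimensional K (LinearMap.range t) := Module.finite_of_finrank_pos (by omega)
  let e : LinearMap.range t ≃ₗ[K] K := LinearEquiv.ofFinrankEq _ _ (by simp [ht])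
  refine ⟨e.toLinearMap ∘ₗ t.rangeRestrict, fun v hv => ?_⟩
  simp at hv
  simpa using hv

theorem aux_W {K U V : Type*} [Field K]
    [AddCommGroup U] [Module K U] [FiniteDimensional K U]
    [AddCommGroup V] [Module K V] [FiniteDimensional K V]
    (S : Submodule K (U →ₗ[K] V)) :
    ∃ W : Submodule K V, Module.finrank K S + Module.finrank K V ≤
        Module.finrank K W + Module.finrank K (U →ₗ[K] V) ∧
      ∀ t : V →ₗ[K] U, (∀ s ∈ S, LinearMap.trace K U (t ∘ₗ s) = 0) →
        Module.finrank K (LinearMap.range t) = 1 → W ≤ LinearMap.ker t := by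
  let B : (V →ₗ[K] U) →ₗ[K] Module.Dual K (U →ₗ[K] V) :=
    LinearMap.mk₂ K (fun t s => LinearMap.trace K U (t ∘ₗ s))
      (by intros; simp [LinearMap.add_comp]) (by intros; simp [LinearMap.smul_comp])
      (by intros; simp [LinearMap.comp_add]) (by intros; simp [LinearMap.comp_smul])
  have hB : Function.Injective B := by
    rw [injective_iff_map_eq_zero]
    intro t ht
    ext v
    by_contra hv
    obtain ⟨φ, hφ⟩ : ∃ φ : Module.Dual K U, φ (t v) ≠ 0 := by
      by_contra! hc
      exact hv ((Module.forall_dual_apply_eq_zero_iff K _).1 hc)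
    apply hφ
    have h1 : LinearMap.trace K U (t ∘ₗ (φ.smulRight v)) = 0 := LinearMap.congr_fun ht _
    have h2 : t ∘ₗ (φ.smulRight v) = φ.smulRight (t v) := by ext; simp
    rw [h2, LinearMap.trace_smulRight] at h1
    simpa using h1
  let R : Set (V →ₗ[K] U) := {t | (∀ s ∈ S, LinearMap.trace K U (t ∘ₗ s) = 0) ∧
        Module.finrank K (LinearMap.range t) = 1}
  have hk : Module.finrank K (Submodule.span K R) + Module.finrank K S
      ≤ Module.finrank K (U →ₗ[K] V) := by
    rw [← Subspace.finrank_add_finrank_dualAnnihilator_eq S, add_comm,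
      ← LinearEquiv.finrank_eq (Submodule.equivMapOfInjective B hB _).symm]
    apply Nat.add_le_add_left
    apply Submodule.finrank_mono
    rw [Submodule.map_span, Submodule.span_le]
    rintro _ ⟨t, ht, rfl⟩
    rw [SetLike.mem_coe, Submodule.mem_dualAnnihilator]
    exact ht.1
  obtain ⟨f, hfR, hf, -⟩ := Submodule.exists_fun_fin_finrank_span_eq K R
  choose ψ hψ using fun i => aux_ker (f i) (hfR i).2
  refine ⟨LinearMap.ker (LinearMap.pi ψ), ?_, ?_⟩
  · have h1 := (LinearMap.pi ψ).finrank_range_add_finrank_ker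
    have h2 := (LinearMap.range (LinearMap.pi ψ)).finrank_le
    simp only [Module.finrank_fin_fun] at h2
    omega
  · intro t h1 h2 v hv
    have ht : t ∈ Submodule.span K (Set.range f) := by
      rw [hf]; exact Submodule.subset_span (show t ∈ R from ⟨h1, h2⟩)
    have : Submodule.span K (Set.range f) ≤ LinearMap.ker (LinearMap.applyₗ (R := K) v) := by
      rw [Submodule.span_le]
      rintro _ ⟨i, rfl⟩
      exact hψ i (congrFun hv i)
    exact this ht

theorem aux_a {K U V : Type*} [Field K]
    [AddCommGroup U] [Module K U] [FiniteDimensional K U]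
    [AddCommGroup V] [Module K V] [FiniteDimensional K V]
    (𝒮 : AffineSubspace K (U →ₗ[K] V)) [Nonempty ↥𝒮]
    (F : ↥𝒮 →ᵃ[K] V)
    (hrc : ∀ s : ↥𝒮, F s ∈ LinearMap.range (s : U →ₗ[K] V)) (d : V)
    (h : ∀ t : V →ₗ[K] U,
        (∀ s ∈ 𝒮.direction, LinearMap.trace K U (t ∘ₗ s) = 0) →
        Module.finrank K (LinearMap.range t) = 1 → t d = 0)
    (t : 𝒮.direction) (hd : d ∉ LinearMap.range (t : U →ₗ[K] V)) :
        F.linear t ∈ LinearMap.range (t : U →ₗ[K] V) := by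
  have key : ∀ ψ : V →ₗ[K] K, ψ ∘ₗ (t : U →ₗ[K] V) = 0 → ψ d ≠ 0 → ψ (F.linear t) = 0 := by
    intro ψ h1 h2
    obtain ⟨s₀⟩ := ‹Nonempty 𝒮›
    obtain ⟨r, hr, e⟩ := aux_zero 𝒮.direction d h ψ h2 (-(ψ ∘ₗ (s₀ : U →ₗ[K] V)))
    let s : 𝒮 := (⟨r, hr⟩ : 𝒮.direction) +ᵥ s₀
    have hs : ψ ∘ₗ (s : U →ₗ[K] V) = 0 := by
      have : (s : U →ₗ[K] V) = r + s₀ := rfl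
      rw [this, LinearMap.comp_add, e]; simp
    have hst : ψ ∘ₗ ((t +ᵥ s : 𝒮) : U →ₗ[K] V) = 0 := by
      have : ((t +ᵥ s : 𝒮) : U →ₗ[K] V) = t + s := rfl
      rw [this, LinearMap.comp_add, hs, h1]; simp
    have z : ∀ s : 𝒮, ψ ∘ₗ (s : U →ₗ[K] V) = 0 → ψ (F s) = 0 := by
      intro s hs
      obtain ⟨u, hu⟩ := hrc s
      rw [← hu]
      exact LinearMap.congr_fun hs u
    have e2 := z _ hst
    rw [F.map_vadd, vadd_eq_add, map_add, z _ hs, add_zero] at e2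
    exact e2
  obtain ⟨ψ₀, g1, g2⟩ := Submodule.exists_le_ker_of_notMem hd
  have hψ₀ : ψ₀ ∘ₗ (t : U →ₗ[K] V) = 0 := by
    ext u; exact g2 ⟨u, rfl⟩
  by_contra hy
  obtain ⟨ψ, k1, k2⟩ := Submodule.exists_le_ker_of_notMem hy
  have hψ : ψ ∘ₗ (t : U →ₗ[K] V) = 0 := by
    ext u; exact k2 ⟨u, rfl⟩
  have a1 := key ψ₀ hψ₀ g1
  by_cases hz : ψ d = 0
  · have := key (ψ + ψ₀) (by rw [LinearMap.add_comp, hψ, hψ₀, add_zero]) (by simpa [hz] using g1)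
    simp [a1] at this
    exact k1 this
  · exact k1 (key ψ hψ hz)

/-- Let `𝒮` be an affine subspace of `L(U,V)` with
`codim 𝒮 ≤ dim V − 1`, `F : 𝒮 → V` a range-compatible affine map, `S` the translation
vector space (direction) of `𝒮` and `F⃗` the linear part of `F`. Here
`t ∈ S⊥` is expressed by `∀ s ∈ 𝒮.direction, tr (t ∘ s) = 0`. Then:
(a) for every 1-dimensional subspace `D` of `V` contained in the kernel of every rank-1
operator of `S⊥`, and every rank-1 operator `t ∈ S` with `range t ≠ D`, one has
`F⃗ t ∈ range t`;
(b) there exists a 1-dimensional subspace `D` of `V` contained in the kernel of every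
rank-1 operator of `S⊥`;
(c) if `codim 𝒮 < dim V − 1` then `F⃗ t ∈ range t` for every rank-1 operator `t ∈ S`. -/
theorem linear_part_rank_one_lemma
    (K U V : Type*) [Field K]
    [AddCommGroup U] [Module K U] [FiniteDimensional K U]
    [AddCommGroup V] [Module K V] [FiniteDimensional K V]
    (𝒮 : AffineSubspace K (U →ₗ[K] V)) [Nonempty ↥𝒮]
    (hcodim : Module.finrank K (U →ₗ[K] V) + 1 ≤
      Module.finrank K 𝒮.direction + Module.finrank K V)
    (F : ↥𝒮 →ᵃ[K] V)
    (hrc : ∀ s : ↥𝒮, F s ∈ LinearMap.range (s : U →ₗ[K] V)) :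
    (∀ D : Submodule K V, Module.finrank K D = 1 →
      (∀ t : V →ₗ[K] U,
        (∀ s ∈ 𝒮.direction, LinearMap.trace K U (t ∘ₗ s) = 0) →
        Module.finrank K (LinearMap.range t) = 1 → D ≤ LinearMap.ker t) →
      ∀ t : ↥𝒮.direction,
        Module.finrank K (LinearMap.range (t : U →ₗ[K] V)) = 1 →
        LinearMap.range (t : U →ₗ[K] V) ≠ D →
        F.linear t ∈ LinearMap.range (t : U →ₗ[K] V)) ∧
    (∃ D : Submodule K V, Module.finrank K D = 1 ∧
      ∀ t : V →ₗ[K] U,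
        (∀ s ∈ 𝒮.direction, LinearMap.trace K U (t ∘ₗ s) = 0) →
        Module.finrank K (LinearMap.range t) = 1 → D ≤ LinearMap.ker t) ∧
    (Module.finrank K (U →ₗ[K] V) + 1 <
        Module.finrank K 𝒮.direction + Module.finrank K V →
      ∀ t : ↥𝒮.direction,
        Module.finrank K (LinearMap.range (t : U →ₗ[K] V)) = 1 →
        F.linear t ∈ LinearMap.range (t : U →ₗ[K] V)) := by
  obtain ⟨W, hW, hWt⟩ := aux_W 𝒮.direction
  refine ⟨?_, ?_, ?_⟩
  · intro D hD hDt t ht hne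
    have hnle : ¬ D ≤ LinearMap.range (t : U →ₗ[K] V) := fun hle =>
      hne (Submodule.eq_of_le_of_finrank_eq hle (by rw [hD, ht])).symm
    obtain ⟨d, hd, hd2⟩ := SetLike.not_le_iff_exists.1 hnle
    exact aux_a 𝒮 F hrc d (fun t h1 h2 => hDt t h1 h2 hd) t hd2
  · obtain ⟨d, hd, hd0⟩ := W.exists_mem_ne_zero_of_ne_bot (by
      rintro rfl
      simp at hW
      omega)
    refine ⟨Submodule.span K {d}, finrank_span_singleton hd0, fun t h1 h2 => ?_⟩
    rw [Submodule.span_singleton_le_iff_mem]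
    exact hWt t h1 h2 hd
  · intro hlt t ht
    have hnle : ¬ W ≤ LinearMap.range (t : U →ₗ[K] V) := fun hle => by
      have := Submodule.finrank_mono hle
      omega
    obtain ⟨d, hd, hd2⟩ := SetLike.not_le_iff_exists.1 hnle
    exact aux_a 𝒮 F hrc d (fun t h1 h2 => hWt t h1 h2 hd) t hd2
end

section
/- Let U and V be finite-dimensional vector spaces over a field K and S a linear subspace of L(U,V). Assume codim S ≤ dim V − 2, and codim S ≤ dim V − 3 if K has exactly 2 elements. Then every quasi-range-compatible additive group homomorphism F : S → V is local. -/
theorem qrc_exists_not_mem_two {K V : Type*} [Field K] [AddCommGroup V] [Module K V]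
    (W P : Submodule K V) (hW : W ≠ ⊤) (hP : P ≠ ⊤) : ∃ y, y ∉ W ∧ y ∉ P := by
  obtain ⟨a, ha⟩ : ∃ a, a ∉ W := by
    by_contra! h; exact hW (Submodule.eq_top_iff'.2 h)
  obtain ⟨b, hb⟩ : ∃ b, b ∉ P := by
    by_contra! h; exact hP (Submodule.eq_top_iff'.2 h)
  by_cases h1 : a ∈ P
  · by_cases h2 : b ∈ W
    · refine ⟨a + b, fun h => ha ?_, fun h => hb ?_⟩
      · exact (Submodule.add_mem_iff_left W h2).1 h
      · exact (Submodule.add_mem_iff_right P h1).1 h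
    · exact ⟨b, h2, hb⟩
  · exact ⟨a, ha, h1⟩

theorem qrc_span_one_ne_top {K V : Type*} [Field K] [AddCommGroup V] [Module K V]
    [FiniteDimensional K V] (h : 2 ≤ Module.finrank K V) (d : V) :
    Submodule.span K {d} ≠ ⊤ := by
  intro he
  have := finrank_span_le_card (R := K) ({d} : Set V)
  rw [he, finrank_top] at this
  simp at this
  omega

theorem qrc_span_two_ne_top {K V : Type*} [Field K] [AddCommGroup V] [Module K V]
    [FiniteDimensional K V] (h : 3 ≤ Module.finrank K V) (d y : V) :
    Submodule.span K {d, y} ≠ ⊤ := by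
  intro he
  classical
  have := finrank_span_finset_le_card (R := K) ({d, y} : Finset V)
  have h2 : Finset.card ({d, y} : Finset V) ≤ 2 := Finset.card_le_two
  rw [Finset.coe_pair, Set.finrank] at this
  rw [he, finrank_top] at this
  omega

/-- coefficients are determined for an independent pair -/
theorem qrc_pair {K V : Type*} [Field K] [AddCommGroup V] [Module K V]
    {d y : V} (hd : d ≠ 0) (hy : y ∉ Submodule.span K {d}) {a b a' b' : K}
    (h : a • d + b • y = a' • d + b' • y) : a = a' ∧ b = b' := by
  have hb : b = b' := by
    by_contra hne
    apply hy
    rw [Submodule.mem_span_singleton]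
    refine ⟨(b - b')⁻¹ * (a' - a), ?_⟩
    have h3 : (b - b') • y = (a' - a) • d := by
      rw [sub_smul, sub_smul, sub_eq_sub_iff_add_eq_add, add_comm, h, add_comm]
    rw [mul_smul, ← h3, smul_smul, inv_mul_cancel₀ (sub_ne_zero.2 hne), one_smul]
  subst hb
  refine ⟨?_, rfl⟩
  have := add_right_cancel h
  exact smul_left_injective K hd this

/-- every map is a sum of rank one maps -/
theorem qrc_sum {K U V : Type*} [Field K]
    [AddCommGroup U] [Module K U] [FiniteDimensional K U]
    [AddCommGroup V] [Module K V] (s : U →ₗ[K] V) :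
    s = ∑ i, ((Module.finBasis K U).coord i).smulRight (s (Module.finBasis K U i)) := by
  apply (Module.finBasis K U).ext
  intro j
  simp [LinearMap.sum_apply, Finsupp.single_apply]

theorem qrc_rank_one {K U V : Type*} [Field K]
    [AddCommGroup U] [Module K U] [FiniteDimensional K U]
    [AddCommGroup V] [Module K V] [FiniteDimensional K V]
    (hn : 2 ≤ Module.finrank K V)
    (G : (U →ₗ[K] V) →+ V)
    (hG : ∀ (u : Module.Dual K U) (w : V), ∃ c : K, G (u.smulRight w) = c • w) :
    ∃ x : U, ∀ s, G s = s x := by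
  have h1 : (⊥ : Submodule K V) ≠ ⊤ := by
    intro h; have := finrank_top K V; rw [← h, finrank_bot] at this; omega
  obtain ⟨y, hy, -⟩ := qrc_exists_not_mem_two (⊥ : Submodule K V) ⊥ h1 h1
  obtain ⟨z, hz, -⟩ := qrc_exists_not_mem_two _ _ (qrc_span_one_ne_top hn y)
    (qrc_span_one_ne_top hn y)
  have hy0 : y ≠ 0 := by simpa using hy
  choose f hf using hG
  have key : ∀ u w, w ∉ Submodule.span K {y} → f u w = f u y := by
    intro u w hw
    have e : u.smulRight (y + w) = u.smulRight y + u.smulRight w := by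
      ext t; simp
    have e2 := congrArg G e
    rw [map_add, hf, hf, hf, smul_add] at e2
    obtain ⟨h1, h2⟩ := qrc_pair hy0 hw e2
    rw [← h2, h1]
  have hlin : ∀ (l : K) u, f (l • u) y = l * f u y := by
    intro l u
    by_cases hl : l = 0
    · subst hl
      have := hf (0 : Module.Dual K U) y
      have e : (0 : Module.Dual K U).smulRight y = 0 := by ext t; simp
      rw [e, map_zero] at this
      rw [zero_smul, zero_mul]
      exact ((smul_eq_zero.1 this.symm).resolve_right hy0)
    · have e : (l • u).smulRight z = u.smulRight (l • z) := by
        ext t; simp only [LinearMap.smulRight_apply, LinearMap.smul_apply, smul_eq_mul, smul_smul, mul_comm]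
      have e2 := congrArg G e
      have hlz : l • z ∉ Submodule.span K {y} := by
        rwa [Submodule.smul_mem_iff _ hl]
      rw [hf, hf, key _ _ hz, key _ _ hlz, smul_smul] at e2
      have hz0 : z ≠ 0 := by rintro rfl; exact hz (Submodule.zero_mem _)
      rw [smul_left_injective K hz0 e2, mul_comm]
  have hadd : ∀ u v, f (u + v) y = f u y + f v y := by
    intro u v
    have e : (u + v).smulRight y = u.smulRight y + v.smulRight y := by
      ext t; simp [add_smul]
    have e2 := congrArg G e
    rw [map_add, hf, hf, hf, ← add_smul] at e2
    exact smul_left_injective K hy0 e2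
  let φ : Module.Dual K (Module.Dual K U) :=
    { toFun := fun u => f u y, map_add' := hadd, map_smul' := fun l u => by simp [hlin] }
  obtain ⟨x, hx⟩ := (Module.evalEquiv K U).surjective φ
  have hx' : ∀ u, f u y = u x := by
    intro u
    have := LinearMap.congr_fun hx u
    simpa [φ] using this.symm
  have hall : ∀ (u : Module.Dual K U) (w : V), G (u.smulRight w) = u x • w := by
    intro u w
    by_cases hw : w ∈ Submodule.span K {y}
    · obtain ⟨l, rfl⟩ := Submodule.mem_span_singleton.1 hw
      have e : u.smulRight (l • y) = (l • u).smulRight y := by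
        ext t; simp only [LinearMap.smulRight_apply, LinearMap.smul_apply, smul_eq_mul, smul_smul, mul_comm]
      rw [e, hf, hlin, hx', smul_smul, mul_comm]
    · rw [hf, key u w hw, hx']
  refine ⟨x, fun s => ?_⟩
  conv_lhs => rw [qrc_sum s]
  conv_rhs => rw [qrc_sum s]
  rw [map_sum, LinearMap.sum_apply]
  simp [hall]

theorem qrc_base {K U V : Type*} [Field K]
    [AddCommGroup U] [Module K U] [FiniteDimensional K U]
    [AddCommGroup V] [Module K V] [FiniteDimensional K V]
    (hn : 2 ≤ Module.finrank K V) (hn2 : Nat.card K = 2 → 3 ≤ Module.finrank K V)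
    (G : (U →ₗ[K] V) →+ V) (d : V) (hd : d ≠ 0)
    (hG : ∀ s, d ∉ LinearMap.range s → G s ∈ LinearMap.range s) :
    ∃ x : U, ∀ s, G s = s x := by
  have hr1 : ∀ (u : Module.Dual K U) (w : V), w ∉ Submodule.span K {d} →
      ∃ c : K, G (u.smulRight w) = c • w := by
    intro u w hw
    have : d ∉ LinearMap.range (u.smulRight w) := by
      rintro ⟨t, ht⟩
      rw [LinearMap.smulRight_apply] at ht
      have h0 : u t ≠ 0 := by
        intro h; rw [h, zero_smul] at ht; exact hd ht.symm
      apply hw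
      rw [← Submodule.smul_mem_iff _ h0, ht]
      exact Submodule.mem_span_singleton_self d
    obtain ⟨t, ht⟩ := hG _ this
    exact ⟨u t, by rw [← ht, LinearMap.smulRight_apply]⟩
  have hr2 : ∀ (u : Module.Dual K U) (y : V), y ∉ Submodule.span K {d} →
      ∃ g h : K, G (u.smulRight d) = g • d + h • y := by
    intro u y hy
    obtain ⟨a, ha⟩ := hr1 u y hy
    obtain ⟨b, hb⟩ := hr1 u (d + y) (fun h => hy
      ((Submodule.add_mem_iff_right _ (Submodule.mem_span_singleton_self d)).1 h))
    refine ⟨b, b - a, ?_⟩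
    have e : u.smulRight (d + y) = u.smulRight d + u.smulRight y := by
      ext t; simp
    rw [e, map_add, ha] at hb
    rw [eq_sub_of_add_eq hb]
    module
  obtain ⟨y, hy, -⟩ := qrc_exists_not_mem_two _ _ (qrc_span_one_ne_top hn d)
    (qrc_span_one_ne_top hn d)
  have hrd : ∀ u : Module.Dual K U, ∃ c : K, G (u.smulRight d) = c • d := by
    intro v
    obtain ⟨g, h, hgh⟩ := hr2 v y hy
    suffices h = 0 by
      subst this; exact ⟨g, by simpa using hgh⟩
    by_cases hμ : ∃ μ : K, μ ≠ 0 ∧ μ ≠ 1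
    · have hp : ∀ μ : K, μ ≠ 0 → G ((μ • v).smulRight y) = (μ * g - h) • y := by
        intro μ hμ
        obtain ⟨p, hp⟩ := hr1 (μ • v) y hy
        obtain ⟨c, hc⟩ := hr1 (μ • v) (μ⁻¹ • d + y) (fun h => hy
          ((Submodule.add_mem_iff_right _ (Submodule.smul_mem _ _
            (Submodule.mem_span_singleton_self d))).1 h))
        have e : (μ • v).smulRight (μ⁻¹ • d + y) = v.smulRight d + (μ • v).smulRight y := by
          ext t
          simp only [LinearMap.smulRight_apply, LinearMap.add_apply, LinearMap.smul_apply,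
            smul_add, smul_smul, smul_eq_mul]
          congr 2
          field_simp
        rw [e, map_add, hgh, hp] at hc
        have hc' : g • d + (h + p) • y = (c * μ⁻¹) • d + c • y := by
          rw [add_smul, ← add_assoc, hc, smul_add, smul_smul]
        obtain ⟨h1, h2⟩ := qrc_pair hd hy hc'
        rw [hp]
        congr 1
        rw [h1, ← h2]
        field_simp
        ring
      obtain ⟨μ, h0, h1⟩ := hμ
      have e1 := hp 1 one_ne_zero
      have e2 := hp μ h0
      have e3 := hp (1 - μ) (sub_ne_zero.2 (Ne.symm h1))
      have e : ((1 : K) • v).smulRight y = (μ • v).smulRight y + ((1 - μ) • v).smulRight y := by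
        rw [show (1 : K) • v = μ • v + (1 - μ) • v by module]
        ext t
        simp only [LinearMap.smulRight_apply, LinearMap.add_apply, add_smul]
      rw [e, map_add, e2, e3, ← add_smul] at e1
      have hy0 : y ≠ 0 := by rintro rfl; exact hy (Submodule.zero_mem _)
      have := smul_left_injective K hy0 e1
      linear_combination - this
    · push Not at hμ
      have h3 : 3 ≤ Module.finrank K V := by
        apply hn2
        rw [Nat.card_eq_two_iff]
        refine ⟨0, 1, zero_ne_one, ?_⟩
        ext t
        simp only [Set.mem_insert_iff, Set.mem_singleton_iff, Set.mem_univ, iff_true]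
        by_cases ht : t = 0
        · exact Or.inl ht
        · exact Or.inr (hμ t ht)
      obtain ⟨z, hz, -⟩ := qrc_exists_not_mem_two _ _ (qrc_span_two_ne_top h3 d y)
        (qrc_span_two_ne_top h3 d y)
      have hz1 : z ∉ Submodule.span K {d} := fun h =>
        hz (Submodule.span_mono (by simp) h)
      obtain ⟨g', h', hgh'⟩ := hr2 v z hz1
      have hh' : h' = 0 := by
        by_contra hne
        apply hz
        rw [← Submodule.smul_mem_iff _ hne, Submodule.mem_span_pair]
        refine ⟨g - g', h, ?_⟩
        have := hgh.symm.trans hgh'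
        rw [sub_smul, sub_add_eq_add_sub, this]; abel
      subst hh'
      have h4 : g • d + h • y = g' • d + (0 : K) • y := by
        rw [← hgh, hgh']; simp
      exact (qrc_pair hd hy h4).2
  apply qrc_rank_one hn G
  intro u w
  by_cases hw : w ∈ Submodule.span K {d}
  · obtain ⟨l, rfl⟩ := Submodule.mem_span_singleton.1 hw
    have e : u.smulRight (l • d) = (l • u).smulRight d := by
      ext t; simp only [LinearMap.smulRight_apply, LinearMap.smul_apply, smul_eq_mul, smul_smul, mul_comm]
    by_cases hl : l = 0
    · refine ⟨0, ?_⟩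
      have e : u.smulRight (l • d) = 0 := by ext t; simp [hl]
      rw [e]; simp
    · obtain ⟨c, hc⟩ := hrd (l • u)
      refine ⟨c * l⁻¹, ?_⟩
      rw [e, hc, smul_smul, inv_mul_cancel_right₀ hl]
  · exact hr1 u w hw

theorem qrc_codim {K U V : Type*} [Field K]
    [AddCommGroup U] [Module K U] [FiniteDimensional K U]
    [AddCommGroup V] [Module K V] [FiniteDimensional K V]
    (R : Submodule K (U →ₗ[K] V)) (y : V) (hy : y ≠ 0) (u : Module.Dual K U)
    (hu : u.smulRight y ∉ R) (k : ℕ)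
    (h : Module.finrank K (U →ₗ[K] V) + k ≤ Module.finrank K R + Module.finrank K V) :
    Module.finrank K (V ⧸ Submodule.span K {y}) + 1 = Module.finrank K V ∧
    Module.finrank K (U →ₗ[K] (V ⧸ Submodule.span K {y})) + k ≤
      Module.finrank K (R.map ((Submodule.span K {y}).mkQ.compRight K (M := U)))
        + Module.finrank K (V ⧸ Submodule.span K {y}) := by
  have h1 : Module.finrank K (V ⧸ Submodule.span K {y}) + 1 = Module.finrank K V := by
    rw [← finrank_span_singleton (K := K) hy]
    exact Submodule.finrank_quotient_add_finrank _
  refine ⟨h1, ?_⟩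
  set P := (Submodule.span K {y}).mkQ.compRight K (M := U) with hP
  have hsurj : Function.Surjective P := by
    intro t
    obtain ⟨g, hg⟩ := LinearMap.exists_rightInverse_of_surjective
      (Submodule.span K {y}).mkQ (Submodule.range_mkQ _)
    refine ⟨g ∘ₗ t, ?_⟩
    ext s
    have := LinearMap.congr_fun hg (t s)
    simpa [P] using this
  have hker := LinearMap.finrank_range_add_finrank_ker P
  rw [LinearMap.range_eq_top.2 hsurj, finrank_top] at hker
  have hR := LinearMap.finrank_range_add_finrank_ker (P.domRestrict R)
  rw [LinearMap.range_domRestrict] at hR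
  have hk : Module.finrank K (LinearMap.ker (P.domRestrict R)) <
      Module.finrank K (LinearMap.ker P) := by
    rw [← Submodule.finrank_map_subtype_eq R (LinearMap.ker (P.domRestrict R))]
    apply Submodule.finrank_lt_finrank_of_lt
    rw [SetLike.lt_iff_le_and_exists]
    refine ⟨?_, u.smulRight y, ?_, ?_⟩
    · rintro _ ⟨s, hs, rfl⟩
      exact hs
    · rw [LinearMap.mem_ker]
      ext t
      simp only [P, LinearMap.compRight_apply, LinearMap.comp_apply, LinearMap.smulRight_apply,
        LinearMap.zero_apply, Submodule.mkQ_apply, Submodule.Quotient.mk_eq_zero]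
      exact Submodule.smul_mem _ _ (Submodule.mem_span_singleton_self y)
    · rintro ⟨s, hs, hs2⟩
      exact hu (hs2 ▸ s.2)
  omega

theorem qrc_eval_surj {K U V : Type*} [Field K]
    [AddCommGroup U] [Module K U]
    [AddCommGroup V] [Module K V] (x : U) (hx : x ≠ 0) (w : V) :
    ∃ u : Module.Dual K U, u x = 1 := by
  obtain ⟨u, hu⟩ : ∃ u : Module.Dual K U, u x ≠ 0 := by
    by_contra! h
    exact hx ((Module.forall_dual_apply_eq_zero_iff K x).1 h)
  exact ⟨(u x)⁻¹ • u, by simp [hu]⟩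

theorem qrc_main.{u, v1, v2, v3} {K : Type v1} {U : Type v2} {A : Type v3} [Field K]
    [AddCommGroup U] [Module K U] [FiniteDimensional K U]
    [AddCommGroup A] [Module K A] (n : ℕ) :
    ∀ (V : Type u) [AddCommGroup V] [Module K V] [FiniteDimensional K V]
    (_ : Module.finrank K V = n)
    (ρ : A →ₗ[K] (U →ₗ[K] V)) (F : A →+ V) (d : V) (_ : d ≠ 0)
    (_ : Module.finrank K (U →ₗ[K] V) + 2 ≤
      Module.finrank K (LinearMap.range ρ) + Module.finrank K V)
    (_ : Nat.card K = 2 → Module.finrank K (U →ₗ[K] V) + 3 ≤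
      Module.finrank K (LinearMap.range ρ) + Module.finrank K V)
    (_ : ∀ a, d ∉ LinearMap.range (ρ a) → F a ∈ LinearMap.range (ρ a)),
    ∃ x : U, ∀ a, F a = ρ a x := by
  induction n with
  | zero =>
    intro V _ _ _ hV ρ F d hd
    have := Module.finrank_zero_iff.1 hV
    exact absurd (Subsingleton.elim d 0) hd
  | succ n ih =>
    intro V _ _ _ hV ρ F d hd h1 h2 hF
    by_cases htop : LinearMap.range ρ = ⊤
    · obtain ⟨σ, hσ⟩ := LinearMap.exists_rightInverse_of_surjective ρ htop
      have hσ' : ∀ s, ρ (σ s) = s := fun s => LinearMap.congr_fun hσ s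
      rw [htop, finrank_top] at h1 h2
      obtain ⟨x, hx⟩ := qrc_base (K := K) (U := U) (V := V) (by omega)
        (fun h => by have := h2 h; omega)
        (F.comp σ.toAddMonoidHom) d hd (by
          intro s hs
          have := hF (σ s)
          rw [hσ'] at this
          exact this hs)
      refine ⟨x, fun a => ?_⟩
      rw [← hx]
      have h0 : ρ (a - σ (ρ a)) = 0 := by rw [map_sub, hσ', sub_self]
      have := hF (a - σ (ρ a))
      rw [h0] at this
      have h3 := this (by simpa using hd)
      simp only [LinearMap.range_zero, Submodule.mem_bot, map_sub] at h3
      exact sub_eq_zero.1 h3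
    · have hlt := Submodule.finrank_lt (lt_top_iff_ne_top.2 htop).ne
      have hn3 : 3 ≤ Module.finrank K V := by omega
      let W : Submodule K V :=
        { carrier := {y | ∀ u : Module.Dual K U, u.smulRight y ∈ LinearMap.range ρ}
          zero_mem' := fun u => by
            rw [show u.smulRight (0 : V) = 0 by ext t; simp]; exact Submodule.zero_mem _
          add_mem' := fun {a b} ha hb u => by
            rw [show u.smulRight (a + b) = u.smulRight a + u.smulRight b by ext t; simp]
            exact Submodule.add_mem _ (ha u) (hb u)
          smul_mem' := fun c a ha u => by
            rw [show u.smulRight (c • a) = c • u.smulRight a by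
              ext t; simp only [LinearMap.smulRight_apply, LinearMap.smul_apply, smul_eq_mul, smul_smul, mul_comm]]
            exact Submodule.smul_mem _ _ (ha u) }
      have hW : W ≠ ⊤ := by
        intro hW
        apply htop
        rw [Submodule.eq_top_iff']
        intro s
        rw [qrc_sum s]
        refine Submodule.sum_mem _ fun i _ => ?_
        have : s (Module.finBasis K U i) ∈ W := hW ▸ Submodule.mem_top
        exact this _
      have step : ∀ y, y ∉ W → y ∉ Submodule.span K {d} →
          ∃ x : U, ∀ a, ∃ c : K, F a = ρ a x + c • y := by
        intro y hyW hyd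
        have hy0 : y ≠ 0 := by rintro rfl; exact hyW (Submodule.zero_mem _)
        obtain ⟨u, hu⟩ : ∃ u : Module.Dual K U, u.smulRight y ∉ LinearMap.range ρ := by
          by_contra! h; exact hyW h
        set P := (Submodule.span K {y}).mkQ.compRight K (M := U) with hP
        have c1 := qrc_codim (LinearMap.range ρ) y hy0 u hu 2 h1
        have c2 := fun h => (qrc_codim (LinearMap.range ρ) y hy0 u hu 3 (h2 h)).2
        rw [← LinearMap.range_comp] at c1 c2
        obtain ⟨x, hx⟩ := ih (V ⧸ Submodule.span K {y}) (by omega) (P ∘ₗ ρ)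
          ((Submodule.span K {y}).mkQ.toAddMonoidHom.comp F)
          ((Submodule.span K {y}).mkQ d) (by
            rw [Submodule.mkQ_apply, Ne, Submodule.Quotient.mk_eq_zero]
            intro h
            obtain ⟨l, hl⟩ := Submodule.mem_span_singleton.1 h
            have hl0 : l ≠ 0 := by
              rintro rfl; rw [zero_smul] at hl; exact hd hl.symm
            apply hyd
            rw [← Submodule.smul_mem_iff _ hl0, hl]
            exact Submodule.mem_span_singleton_self d) c1.2 c2 (by
            intro a ha
            have : d ∉ LinearMap.range (ρ a) := by
              rintro ⟨t, ht⟩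
              exact ha ⟨t, by simp [P, ht]⟩
            obtain ⟨t, ht⟩ := hF a this
            exact ⟨t, by simp [P, ht]⟩)
        refine ⟨x, fun a => ?_⟩
        have h3 : (Submodule.span K {y}).mkQ (F a) = (Submodule.span K {y}).mkQ (ρ a x) := hx a
        rw [Submodule.mkQ_apply, Submodule.mkQ_apply, Submodule.Quotient.eq,
          Submodule.mem_span_singleton] at h3
        obtain ⟨c, hc⟩ := h3
        exact ⟨c, by rw [hc]; abel⟩
      obtain ⟨y, hyW, hyd⟩ := qrc_exists_not_mem_two W _ hW
        (qrc_span_one_ne_top (by omega) d)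
      obtain ⟨z, hzW, hzd⟩ := qrc_exists_not_mem_two W _ hW (qrc_span_two_ne_top hn3 d y)
      have hzd1 : z ∉ Submodule.span K {d} := fun h => hzd (Submodule.span_mono (by simp) h)
      have hzy : z ∉ Submodule.span K {y} := fun h => hzd (Submodule.span_mono (by simp) h)
      have hy0 : y ≠ 0 := by rintro rfl; exact hyW (Submodule.zero_mem _)
      obtain ⟨x1, hx1⟩ := step y hyW hyd
      obtain ⟨x2, hx2⟩ := step z hzW hzd1
      choose α hα using hx1
      choose β hβ using hx2
      have hdiff : ∀ a, ρ a (x2 - x1) = α a • y - β a • z := by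
        intro a
        have := (hα a).symm.trans (hβ a)
        rw [map_sub, sub_eq_sub_iff_add_eq_add, ← this]; abel
      by_cases hx : x2 - x1 = 0
      · refine ⟨x1, fun a => ?_⟩
        have := hdiff a
        rw [hx, map_zero] at this
        have h5 : α a • y + (- β a) • z = (0 : K) • y + (0 : K) • z := by
          rw [neg_smul, ← sub_eq_add_neg, ← this]; simp
        rw [hα, (qrc_pair hy0 hzy h5).1]; simp
      · exfalso
        obtain ⟨u, hu⟩ := qrc_eval_surj (K := K) (V := V) (x2 - x1) hx 0
        let Q := Submodule.span K {y, z}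
        let E : (U →ₗ[K] V) →ₗ[K] (V ⧸ Q) := Q.mkQ ∘ₗ LinearMap.applyₗ (x2 - x1)
        have hE : ∀ s, E s = Q.mkQ (s (x2 - x1)) := fun s => rfl
        have hEs : Function.Surjective E := by
          intro t
          obtain ⟨w, rfl⟩ := Q.mkQ_surjective t
          exact ⟨u.smulRight w, by rw [hE]; simp [hu]⟩
        have hle : LinearMap.range ρ ≤ LinearMap.ker E := by
          rintro _ ⟨a, rfl⟩
          rw [LinearMap.mem_ker, hE, hdiff, Submodule.mkQ_apply, Submodule.Quotient.mk_eq_zero]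
          exact Submodule.mem_span_pair.2 ⟨α a, -β a, by module⟩
        have hk := LinearMap.finrank_range_add_finrank_ker E
        rw [LinearMap.range_eq_top.2 hEs, finrank_top] at hk
        have hq := Submodule.finrank_quotient_add_finrank Q
        have hQ2 : Module.finrank K Q ≤ 2 := by
          classical
          have := finrank_span_finset_le_card (R := K) ({y, z} : Finset V)
          have h2 : Finset.card ({y, z} : Finset V) ≤ 2 := Finset.card_le_two
          rw [Finset.coe_pair, Set.finrank] at this
          exact this.trans h2
        have heq : LinearMap.range ρ = LinearMap.ker E :=
          Submodule.eq_of_le_of_finrank_le hle (by omega)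
        have hmem : u.smulRight (y + z) ∈ LinearMap.range ρ := by
          rw [heq, LinearMap.mem_ker, hE, Submodule.mkQ_apply, Submodule.Quotient.mk_eq_zero]
          exact Submodule.mem_span_pair.2 ⟨1, 1, by simp [hu]⟩
        obtain ⟨a, ha⟩ := hmem
        have h6 := hdiff a
        have h7 : (1 : K) • y + (1 : K) • z = α a • y + (- β a) • z := by
          rw [neg_smul, ← sub_eq_add_neg, ← h6, ha]; simp [hu]
        have hα1 := (qrc_pair hy0 hzy h7).1
        have hnd : d ∉ LinearMap.range (ρ a) := by
          rintro ⟨t, ht⟩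
          rw [ha, LinearMap.smulRight_apply] at ht
          have hut : u t ≠ 0 := by
            intro h; rw [h, zero_smul] at ht; exact hd ht.symm
          apply hzd
          rw [Submodule.mem_span_pair]
          refine ⟨(u t)⁻¹, -1, ?_⟩
          rw [← ht, smul_smul, inv_mul_cancel₀ hut]
          module
        obtain ⟨t, ht⟩ := hF a hnd
        rw [hα, ha, ← hα1] at ht
        simp only [LinearMap.smulRight_apply] at ht
        have h8 : (u t) • y + (u t) • z = (u x1 + 1) • y + (u x1) • z := by
          rw [← smul_add, ht]; module
        obtain ⟨h9, h10⟩ := qrc_pair hy0 hzy h8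
        rw [h10] at h9
        simp at h9

/-- Let `U` and `V` be finite-dimensional vector spaces over a field `K`
and `S` a linear subspace of `L(U,V)`. Assume `codim S ≤ dim V − 2`, and
`codim S ≤ dim V − 3` if `K` has exactly 2 elements. Then every quasi-range-compatible
additive group homomorphism `F : S → V` is local. -/
theorem quasi_range_compatible_hom_is_local
    (K U V : Type*) [Field K]
    [AddCommGroup U] [Module K U] [FiniteDimensional K U]
    [AddCommGroup V] [Module K V] [FiniteDimensional K V]
    (S : Submodule K (U →ₗ[K] V))
    (h1 : Module.finrank K (U →ₗ[K] V) + 2 ≤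
      Module.finrank K S + Module.finrank K V)
    (h2 : Nat.card K = 2 → Module.finrank K (U →ₗ[K] V) + 3 ≤
      Module.finrank K S + Module.finrank K V)
    (F : ↥S →+ V)
    (hq : ∃ D : Submodule K V, Module.finrank K D = 1 ∧
      ∀ s : ↥S, ¬ D ≤ LinearMap.range (s : U →ₗ[K] V) →
        F s ∈ LinearMap.range (s : U →ₗ[K] V)) :
    ∃ x : U, ∀ s : ↥S, F s = (s : U →ₗ[K] V) x := by
  obtain ⟨D, hD, hF⟩ := hq
  obtain ⟨d, hd, hspan⟩ := finrank_eq_one_iff'.1 hD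
  refine qrc_main (K := K) (U := U) (A := S) _ V rfl S.subtype F d (by simpa using hd)
    (by rw [Submodule.range_subtype]; exact h1) (by rw [Submodule.range_subtype]; exact h2) ?_
  intro a ha
  exact hF a (fun h => ha (h d.2))
end

section
/- Let U and V be finite-dimensional vector spaces over a field K, and S a linear subspace of L(U,V) with codim S ≤ 2·dim V − 3, and codim S ≤ 2·dim V − 4 if K has exactly 2 elements. Assume there is a vector x ∈ U with dim Sx = 1, where Sx = {s(x) : s ∈ S}, and let F : S → V be an additive group homomorphism that is non-local and quasi-range-compatible with respect to some 1-dimensional linear subspace D of V. Then either (a) F is the sum of a local map and a map of the form s ↦ φ(s(x)) for some additive group endomorphism φ of Sx that is not K-linear, or (b) D = Sx and F is the sum of a local map and a map of the form s ↦ φ(s(x)) for some additive group homomorphism φ : D → V. -/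
open Module

theorem third_elt {K : Type*} [Field K] (h : Nat.card K ≠ 2) (a b : K) : ∃ c : K, c ≠ a ∧ c ≠ b := by
  by_contra! hc
  apply h
  rw [Nat.card_eq_two_iff]
  have h0 := hc 0
  have h1 := hc 1
  have hab : a ≠ b := by
    rintro rfl
    by_cases h0' : (0:K) = a
    · by_cases h1' : (1:K) = a
      · exact zero_ne_one (h0'.trans h1'.symm)
      · exact h1' (h1 h1')
    · exact h0' (h0 h0')
  refine ⟨a, b, hab, ?_⟩
  ext c
  simp only [Set.mem_insert_iff, Set.mem_singleton_iff, Set.mem_univ, iff_true]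
  by_cases hca : c = a
  · exact Or.inl hca
  · exact Or.inr (hc c hca)

theorem avoid {K W : Type*} [Field K] [AddCommGroup W] [Module K W] [FiniteDimensional K W]
    (H : Submodule K W) (h1 : finrank K H + 1 ≤ finrank K W)
    (h2 : Nat.card K = 2 → finrank K H + 2 ≤ finrank K W)
    (a b : W →ₗ[K] K) (ha : a ≠ 0) (hb : b ≠ 0) :
    ∃ f, f ∉ H ∧ a f ≠ 0 ∧ b f ≠ 0 := by
  obtain ⟨u, hau, hbu⟩ : ∃ u, a u ≠ 0 ∧ b u ≠ 0 := by
    obtain ⟨p, hp⟩ : ∃ p, a p ≠ 0 := by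
      by_contra! h; exact ha (LinearMap.ext h)
    obtain ⟨q, hq⟩ : ∃ p, b p ≠ 0 := by
      by_contra! h; exact hb (LinearMap.ext h)
    by_cases hp' : b p = 0
    · by_cases hq' : a q = 0
      · exact ⟨p + q, by simp [hq', hp], by simp [hp', hq]⟩
      · exact ⟨q, hq', hq⟩
    · exact ⟨p, hp, hp'⟩
  by_cases huH : u ∈ H
  swap
  · exact ⟨u, huH, hau, hbu⟩
  by_cases hK : Nat.card K = 2
  · have h2 := h2 hK
    let P := LinearMap.ker a ⊓ LinearMap.ker b
    by_cases hP : P ≤ H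
    · exfalso
      have e1 : finrank K W ≤ finrank K P + 2 := by
        have := LinearMap.finrank_range_add_finrank_ker (a.prod b)
        rw [LinearMap.ker_prod] at this
        have h3 : finrank K (LinearMap.range (a.prod b)) ≤ 2 := by
          refine (Submodule.finrank_le _).trans ?_
          simp
        change _ + finrank K P = _ at this
        omega
      have := Submodule.eq_of_le_of_finrank_le hP (by omega)
      rw [← this] at huH
      exact hau huH.1
    · obtain ⟨e, he, heH⟩ := Set.not_subset.mp hP
      have h3 : a e = 0 := he.1
      have h4 : b e = 0 := he.2
      refine ⟨u + e, fun h => heH ?_, by simpa [h3] using hau, by simpa [h4] using hbu⟩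
      simpa using H.sub_mem h huH
  · obtain ⟨w, hw⟩ : ∃ w, w ∉ H := by
      by_contra! h
      have : H = ⊤ := by ext; simp [h]
      rw [this, finrank_top] at h1
      omega
    obtain ⟨c, hc1, hc2⟩ := third_elt hK (-(a w) / a u) (-(b w) / b u)
    refine ⟨w + c • u, fun h => hw ?_, fun h => hc1 ?_, fun h => hc2 ?_⟩
    · simpa using H.sub_mem h (H.smul_mem c huH)
    · rw [eq_div_iff hau]; simp at h; linear_combination h
    · rw [eq_div_iff hbu]; simp at h; linear_combination h

theorem lemA {K U V : Type*} [Field K]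
    [AddCommGroup U] [Module K U] [FiniteDimensional K U]
    [AddCommGroup V] [Module K V] [FiniteDimensional K V]
    (S : Submodule K (U →ₗ[K] V)) (k : ℕ)
    (hk : finrank K (U →ₗ[K] V) ≤ finrank K S + k) :
    ∃ H : Submodule K (Dual K V), finrank K H ≤ k ∧
      ∀ f, f ∉ H → ∀ α : Dual K U, ∃ s ∈ S, f ∘ₗ s = α := by
  let B : Set (Dual K V) := {f | ∃ u : U, u ≠ 0 ∧ ∀ s ∈ S, f (s u) = 0}
  obtain ⟨b, hbB, hbs, hbi⟩ := exists_linearIndependent K B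
  refine ⟨Submodule.span K B, ?_, ?_⟩
  · have hfin : Finite b := hbi.finite
    have : Fintype b := Fintype.ofFinite b
    have hu : ∀ f : b, ∃ u : U, u ≠ 0 ∧ ∀ s ∈ S, (f : Dual K V) (s u) = 0 := fun f => hbB f.2
    choose u hu0 hu using hu
    let ψ : b → Dual K (U →ₗ[K] V) := fun f => (f : Dual K V) ∘ₗ LinearMap.applyₗ (u f)
    have hψ : LinearIndependent K ψ := by
      rw [Fintype.linearIndependent_iff] at hbi ⊢
      intro c hc i
      obtain ⟨α, hα⟩ : ∃ α : Dual K U, α (u i) ≠ 0 := by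
        by_contra! h
        exact hu0 i ((Module.forall_dual_apply_eq_zero_iff K _).mp h)
      have := hbi (fun j => c j * α (u j)) (by
        ext v
        have := LinearMap.congr_fun hc (α.smulRight v)
        simp [ψ] at this
        simp [mul_assoc, this]) i
      exact (mul_eq_zero.mp this).resolve_right hα
    have hψS : ∀ i, ψ i ∈ S.dualAnnihilator := by
      intro i
      rw [Submodule.mem_dualAnnihilator]
      exact fun s hs => hu i s hs
    have h1 : Fintype.card b ≤ finrank K S.dualAnnihilator := by
      have : LinearIndependent K (fun i => (⟨ψ i, hψS i⟩ : S.dualAnnihilator)) :=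
        LinearIndependent.of_comp S.dualAnnihilator.subtype hψ
      exact this.fintype_card_le_finrank
    have h2 := Subspace.finrank_add_finrank_dualAnnihilator_eq S
    have h3 : finrank K (Submodule.span K b) = Fintype.card b := by
      have := finrank_span_eq_card hbi
      rwa [Subtype.range_coe] at this
    rw [← hbs, h3]
    omega
  · intro f hf α
    let m : (U →ₗ[K] V) →ₗ[K] Dual K U := LinearMap.compRight K f
    have : S.map m = ⊤ := by
      by_contra hne
      obtain ⟨ξ, hξ0, hξ⟩ := Submodule.exists_le_ker_of_lt_top _ (lt_top_iff_ne_top.mpr hne)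
      obtain ⟨u, rfl⟩ := (Module.evalEquiv K U).surjective ξ
      apply hf
      apply Submodule.subset_span
      refine ⟨u, ?_, ?_⟩
      · rintro rfl; simp at hξ0
      · intro s hs
        have := hξ (Submodule.mem_map_of_mem hs)
        simpa [m] using this
    have hα : α ∈ S.map m := by rw [this]; trivial
    obtain ⟨s, hs, h⟩ := hα
    exact ⟨s, hs, h⟩

theorem codim_comap {K A B : Type*} [Field K]
    [AddCommGroup A] [Module K A] [FiniteDimensional K A]
    [AddCommGroup B] [Module K B] [FiniteDimensional K B] (j : A →ₗ[K] B) (S : Submodule K B) (k : ℕ)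
    (hk : finrank K B ≤ finrank K S + k) : finrank K A ≤ finrank K (S.comap j) + k := by
  have h1 := LinearMap.finrank_range_add_finrank_ker (S.mkQ ∘ₗ j)
  rw [LinearMap.ker_comp, Submodule.ker_mkQ] at h1
  have h2 := Submodule.finrank_le (LinearMap.range (S.mkQ ∘ₗ j))
  have h3 := S.finrank_quotient_add_finrank
  omega

theorem finrank_comap_le {K A B : Type*} [Field K]
    [AddCommGroup A] [Module K A] [FiniteDimensional K A]
    [AddCommGroup B] [Module K B] [FiniteDimensional K B] (r : A →ₗ[K] B) (H : Submodule K B) :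
    finrank K (H.comap r) ≤ finrank K H + finrank K (LinearMap.ker r) := by
  have h2 := LinearMap.finrank_range_add_finrank_ker (r.domRestrict (H.comap r))
  have h3 : finrank K (LinearMap.range (r.domRestrict (H.comap r))) ≤ finrank K H := by
    apply Submodule.finrank_mono
    rintro _ ⟨⟨a, ha⟩, rfl⟩
    exact ha
  have h4 : finrank K (LinearMap.ker (r.domRestrict (H.comap r))) ≤
      finrank K (LinearMap.ker r) := by
    let g : LinearMap.ker (r.domRestrict (H.comap r)) →ₗ[K] LinearMap.ker r :=
      LinearMap.codRestrict _ ((H.comap r).subtype ∘ₗ Submodule.subtype _) (fun c => c.2)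
    apply LinearMap.finrank_le_finrank_of_injective (f := g)
    intro a b hab
    have := congrArg Subtype.val hab
    exact Subtype.ext (Subtype.ext this)
  omega

theorem lemA' {K U V : Type*} [Field K]
    [AddCommGroup U] [Module K U] [FiniteDimensional K U]
    [AddCommGroup V] [Module K V] [FiniteDimensional K V]
    (S : Submodule K (U →ₗ[K] V)) (k r : ℕ)
    (hk : finrank K (U →ₗ[K] V) ≤ finrank K S + k)
    (V' : Submodule K V) (hr : finrank K V ≤ finrank K V' + r) :
    ∃ H : Submodule K (Dual K V), finrank K H ≤ k + r ∧
      ∀ f, f ∉ H → ∀ α : Dual K U, ∃ s ∈ S, (∀ u, s u ∈ V') ∧ f ∘ₗ s = α := by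
  let j : (U →ₗ[K] V') →ₗ[K] (U →ₗ[K] V) := LinearMap.compRight K V'.subtype
  obtain ⟨H, hH, h⟩ := lemA (S.comap j) k (codim_comap j S k hk)
  let res : Dual K V →ₗ[K] Dual K V' := V'.dualRestrict
  refine ⟨H.comap res, ?_, ?_⟩
  · have h4 := finrank_comap_le (K := K) (A := Dual K V) (B := Dual K V') res H
    rw [Submodule.dualRestrict_ker_eq_dualAnnihilator] at h4
    have h5 := Subspace.finrank_add_finrank_dualAnnihilator_eq V'
    omega
  · intro f hf α
    obtain ⟨s, hs, e⟩ := h (res f) hf α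
    exact ⟨j s, hs, fun u => (s u).2, e⟩

theorem field_lin {K M : Type*} [Field K] [AddCommGroup M] [Module K M] (hK : Nat.card K ≠ 2)
    (A B : M →+ K)
    (h : ∀ a b : K, a + b ≠ 0 → ∀ α, a * A (b • α) = b * B (a • α)) :
    A = B ∧ ∀ (c : K) α, B (c • α) = c * B α := by
  have h1 : ∀ a : K, a ≠ 0 → a ≠ -1 → ∀ α, B (a • α) = a * A α := by
    intro a ha ha' α
    have := h a 1 (fun e => ha' (by linear_combination e)) α
    simpa using this.symm
  have hA : ∀ (b : K) α, A (b • α) = b * A α := by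
    intro b α
    by_cases hb0 : b = 0
    · simp [hb0]
    by_cases hb1 : b = 1
    · simp [hb1]
    by_cases hb2 : b = -1
    · simp [hb2]
    have key : ∀ a : K, a ≠ 0 → a ≠ -1 → a + b ≠ 0 → A (b • α) = b * A α := by
      intro a ha ha' hab
      have e := h a b hab α
      rw [h1 a ha ha'] at e
      apply mul_left_cancel₀ ha
      linear_combination e
    by_cases h2 : (2 : K) = 0
    · refine key (b + 1) ?_ ?_ ?_
      · intro e; exact hb2 (by linear_combination e)
      · intro e; exact hb0 (by linear_combination e - h2)
      · intro e; exact one_ne_zero (α := K) (by linear_combination e - b * h2)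
    · refine key 1 one_ne_zero ?_ ?_
      · intro e; exact h2 (by linear_combination e)
      · intro e; exact hb2 (by linear_combination e)
  have hAB : A = B := by
    ext α
    obtain ⟨a, ha, ha'⟩ := third_elt hK 0 (-1)
    have := h1 a ha ha' (a⁻¹ • α)
    rw [← hA, smul_smul, mul_inv_cancel₀ ha, one_smul] at this
    exact this.symm
  exact ⟨hAB, hAB ▸ hA⟩

theorem exists_phi {K U V : Type*} [Field K]
    [AddCommGroup U] [Module K U] [AddCommGroup V] [Module K V]
    (S : Submodule K (U →ₗ[K] V)) (F : S →+ V) (g : Dual K V)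
    (hg : ∀ s : S, g ∘ₗ (s : U →ₗ[K] V) = 0 → g (F s) = 0)
    (hs : ∀ α : Dual K U, ∃ s : S, g ∘ₗ (s : U →ₗ[K] V) = α) :
    ∃ Φ : Dual K U →+ K, ∀ s : S, g (F s) = Φ (g ∘ₗ (s : U →ₗ[K] V)) := by
  choose t ht using hs
  have key : ∀ s s' : S, g ∘ₗ (s : U →ₗ[K] V) = g ∘ₗ (s' : U →ₗ[K] V) → g (F s) = g (F s') := by
    intro s s' e
    have := hg (s - s') (by
      rw [Submodule.coe_sub, LinearMap.comp_sub, e, sub_self])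
    rw [map_sub, map_sub] at this
    exact sub_eq_zero.mp this
  refine ⟨AddMonoidHom.mk' (fun α => g (F (t α))) ?_, ?_⟩
  · intro α β
    rw [← map_add, ← map_add]
    apply key
    rw [Submodule.coe_add, LinearMap.comp_add, ht, ht, ht]
  · intro s
    apply key
    rw [ht]

theorem quasi_local {K U V : Type*} [Field K]
    [AddCommGroup U] [Module K U] [FiniteDimensional K U]
    [AddCommGroup V] [Module K V] [FiniteDimensional K V]
    (S : Submodule K (U →ₗ[K] V)) (k : ℕ)
    (hk : finrank K (U →ₗ[K] V) ≤ finrank K S + k)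
    (h1 : k + 2 ≤ finrank K V) (h2 : Nat.card K = 2 → k + 3 ≤ finrank K V)
    (F : S →+ V) (d : V) (hd : d ≠ 0)
    (hF : ∀ f : Dual K V, f d ≠ 0 → ∀ s : S, f ∘ₗ (s : U →ₗ[K] V) = 0 → f (F s) = 0) :
    ∃ x : U, ∀ s : S, F s = (s : U →ₗ[K] V) x := by
  have hVd : finrank K (Dual K V) = finrank K V := Subspace.dual_finrank_eq
  have ev0 : ∀ v : V, v ≠ 0 → Dual.eval K V v ≠ 0 := by
    intro v hv h
    exact hv ((Module.forall_dual_apply_eq_zero_iff K v).mp fun φ => LinearMap.congr_fun h φ)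
  have pick : ∀ H : Submodule K (Dual K V), finrank K H + 1 ≤ finrank K V →
      (Nat.card K = 2 → finrank K H + 2 ≤ finrank K V) → ∀ v : V, v ≠ 0 →
      ∃ f : Dual K V, f ∉ H ∧ f d = 1 ∧ f v ≠ 0 := by
    intro H hH hH' v hv
    obtain ⟨f, hf, h3, h4⟩ := avoid H (by omega) (by intro h; have := hH' h; omega) _ _ (ev0 d hd) (ev0 v hv)
    simp only [Dual.eval_apply] at h3 h4
    refine ⟨(f d)⁻¹ • f, fun h => hf ?_, by simp [h3], by simp [h3, h4]⟩
    simpa [smul_smul, h3] using H.smul_mem (f d) h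
  obtain ⟨H, hH, hHs⟩ := lemA' S k 0 hk ⊤ (by simp)
  obtain ⟨g, hgH, hgd, -⟩ := pick H (by omega) (by intro h; have := h2 h; omega) d hd
  have hgs : ∀ α : Dual K U, ∃ s : S, g ∘ₗ (s : U →ₗ[K] V) = α := by
    intro α
    obtain ⟨s, hs, -, e⟩ := hHs g hgH α
    exact ⟨⟨s, hs⟩, e⟩
  have hker : ∀ g : Dual K V, finrank K V ≤ finrank K (LinearMap.ker g) + 1 := by
    intro g
    have := LinearMap.finrank_range_add_finrank_ker g
    have h3 := Submodule.finrank_le (LinearMap.range g)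
    rw [finrank_self] at h3
    omega
  obtain ⟨H', hH', hHs'⟩ := lemA' S k 1 hk (LinearMap.ker g) (hker g)
  have joint : ∀ f, f ∉ H' → ∀ α β : Dual K U, ∃ s : S,
      f ∘ₗ (s : U →ₗ[K] V) = α ∧ g ∘ₗ (s : U →ₗ[K] V) = β := by
    intro f hf α β
    obtain ⟨t, ht⟩ := hgs β
    obtain ⟨s, hs, hs0, e⟩ := hHs' f hf (α - f ∘ₗ (t : U →ₗ[K] V))
    refine ⟨⟨s, hs⟩ + t, ?_, ?_⟩
    · rw [Submodule.coe_add, LinearMap.comp_add, e]; simp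
    · rw [Submodule.coe_add, LinearMap.comp_add, ht]
      ext u
      simpa using hs0 u
  obtain ⟨Φ, hΦ⟩ := exists_phi S F g (hF g (by simp [hgd])) hgs
  have main : ∀ f, f ∉ H' → f d = 1 →
      (∀ s : S, f (F s) = Φ (f ∘ₗ (s : U →ₗ[K] V))) ∧ ∀ (c : K) α, Φ (c • α) = c * Φ α := by
    intro f hf hfd
    have jf := joint f hf
    obtain ⟨Ψ, hΨ⟩ := exists_phi S F f (hF f (by simp [hfd]))
      (fun α => (jf α 0).imp fun s hs => hs.1)
    suffices Ψ = Φ ∧ ∀ (c : K) α, Φ (c • α) = c * Φ α by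
      refine ⟨fun s => ?_, this.2⟩
      rw [hΨ, this.1]
    by_cases hK : Nat.card K = 2
    · have h2 := h2 hK
      constructor
      · obtain ⟨H2, hH2, hHs2⟩ := lemA' S k 2 hk (LinearMap.ker g ⊓ LinearMap.ker f) (by
          have := LinearMap.finrank_range_add_finrank_ker (g.prod f)
          rw [LinearMap.ker_prod] at this
          have h3 := Submodule.finrank_le (LinearMap.range (g.prod f))
          simp only [finrank_prod, finrank_self] at h3
          omega)
        obtain ⟨w, hw⟩ : ∃ w, w ∉ H2 ∧ w d = 1 := by
          have hlt : H2 ≠ ⊤ := by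
            rintro rfl
            rw [finrank_top] at hH2
            omega
          obtain ⟨w, -, hw⟩ := Set.not_subset.mp (fun h => hlt (top_le_iff.mp h))
          by_cases hwd : w d = 0
          · by_cases hfH : f ∈ H2
            · refine ⟨w + f, fun h => hw ?_, by simp [hwd, hfd]⟩
              simpa using H2.sub_mem h hfH
            · exact ⟨f, hfH, hfd⟩
          · refine ⟨(w d)⁻¹ • w, fun h => hw ?_, by simp [hwd]⟩
            simpa [smul_smul, hwd] using H2.smul_mem (w d) h
        obtain ⟨hw, hwd⟩ := hw
        ext α
        obtain ⟨t, ht1, ht2⟩ := jf α α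
        obtain ⟨s, hs, hs0, e⟩ := hHs2 w hw (- (w ∘ₗ (t : U →ₗ[K] V)))
        let r : S := ⟨s, hs⟩ + t
        have r1 : f ∘ₗ (r : U →ₗ[K] V) = α := by
          simp only [r, Submodule.coe_add, LinearMap.comp_add, ht1]
          ext u
          simpa using (hs0 u).2
        have r2 : g ∘ₗ (r : U →ₗ[K] V) = α := by
          simp only [r, Submodule.coe_add, LinearMap.comp_add, ht2]
          ext u
          simpa using (hs0 u).1
        have r3 : w ∘ₗ (r : U →ₗ[K] V) = 0 := by
          simp only [r, Submodule.coe_add, LinearMap.comp_add, e]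
          simp
        have e1 := hF w (by simp [hwd]) r r3
        have e2 := hF (f - g + w) (by simp [hfd, hgd, hwd]) r (by
          rw [LinearMap.add_comp, LinearMap.sub_comp, r1, r2, r3]; simp)
        have e3 := hΨ r
        have e4 := hΦ r
        rw [r1] at e3
        rw [r2] at e4
        simp only [LinearMap.add_apply, LinearMap.sub_apply, e1, e3, e4] at e2
        linear_combination e2
      · intro c α
        have hc : c = 0 ∨ c = 1 := by
          obtain ⟨a, ha⟩ := (Nat.card_eq_two_iff' (0 : K)).mp hK
          by_cases hc : c = 0
          · exact Or.inl hc
          · exact Or.inr ((ha.2 c hc).trans (ha.2 1 one_ne_zero).symm)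
        rcases hc with rfl | rfl <;> simp
    · refine field_lin hK Ψ Φ ?_
      intro a b hab α
      obtain ⟨s, s1, s2⟩ := jf (b • α) (-(a • α))
      have e2 := hF (a • f + b • g) (by simpa [hfd, hgd] using hab) s (by
        rw [LinearMap.add_comp, LinearMap.smul_comp, LinearMap.smul_comp, s1, s2]
        rw [smul_neg, smul_smul, smul_smul, mul_comm a b]; simp)
      have e3 := hΨ s
      have e4 := hΦ s
      rw [s1] at e3
      rw [s2, map_neg] at e4
      simp only [LinearMap.add_apply, LinearMap.smul_apply, e3, e4, smul_eq_mul] at e2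
      linear_combination e2
  have hp := pick H' (by omega) (by intro h; have := h2 h; omega)
  obtain ⟨f0, hf0, hf0d, -⟩ := hp d hd
  have hlin := (main f0 hf0 hf0d).2
  let Φl : Dual K (Dual K U) := { toFun := Φ, map_add' := Φ.map_add, map_smul' := hlin }
  obtain ⟨x, hx⟩ := (Module.evalEquiv K U).surjective Φl
  refine ⟨x, fun s => ?_⟩
  by_contra hne
  obtain ⟨f, hf, hfd, hfv⟩ := hp (F s - (s : U →ₗ[K] V) x) (sub_ne_zero.mpr hne)
  apply hfv
  rw [map_sub, (main f hf hfd).1 s]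
  have := LinearMap.congr_fun hx (f ∘ₗ (s : U →ₗ[K] V))
  simp [Φl] at this
  rw [← this, sub_self]

/-- Let `S` be a linear subspace of `L(U,V)` with `codim S ≤ 2 dim V − 3`
(and `≤ 2 dim V − 4` if `#K = 2`), let `x ∈ U` satisfy `dim Sx = 1` (where
`Sx = {s x : s ∈ S}` is `Submodule.map (LinearMap.applyₗ x) S`), and let `F : S → V` be a
non-local additive homomorphism that is quasi-range-compatible with respect to a
1-dimensional subspace `D` of `V`. Then either
(a) `F` is the sum of a local map and `s ↦ φ (s x)` where `φ` is an additive
endomorphism of `Sx` (encoded as an additive map `V →+ V` preserving `Sx`) that is not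
`K`-linear on `Sx`, or
(b) `D = Sx` and `F` is the sum of a local map and `s ↦ φ (s x)` for some additive
homomorphism `φ` (whose values on `Sx = D` are all that matters). -/
theorem quasi_range_compatible_hom_special_type_one
    (K U V : Type*) [Field K]
    [AddCommGroup U] [Module K U] [FiniteDimensional K U]
    [AddCommGroup V] [Module K V] [FiniteDimensional K V]
    (S : Submodule K (U →ₗ[K] V))
    (h1 : Module.finrank K (U →ₗ[K] V) + 3 ≤
      Module.finrank K S + 2 * Module.finrank K V)
    (h2 : Nat.card K = 2 → Module.finrank K (U →ₗ[K] V) + 4 ≤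
      Module.finrank K S + 2 * Module.finrank K V)
    (x : U)
    (hx : Module.finrank K (Submodule.map (LinearMap.applyₗ x) S) = 1)
    (F : ↥S →+ V)
    (hnl : ¬ ∃ y : U, ∀ s : ↥S, F s = (s : U →ₗ[K] V) y)
    (D : Submodule K V) (hD : Module.finrank K D = 1)
    (hq : ∀ s : ↥S, ¬ D ≤ LinearMap.range (s : U →ₗ[K] V) →
      F s ∈ LinearMap.range (s : U →ₗ[K] V)) :
    (∃ (x' : U) (φ : V →+ V),
      (∀ y ∈ Submodule.map (LinearMap.applyₗ x) S,
        φ y ∈ Submodule.map (LinearMap.applyₗ x) S) ∧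
      (¬ ∀ (c : K), ∀ y ∈ Submodule.map (LinearMap.applyₗ x) S,
        φ (c • y) = c • φ y) ∧
      (∀ s : ↥S, F s = (s : U →ₗ[K] V) x' + φ ((s : U →ₗ[K] V) x))) ∨
    (D = Submodule.map (LinearMap.applyₗ x) S ∧
      ∃ (x' : U) (φ : V →+ V),
        ∀ s : ↥S, F s = (s : U →ₗ[K] V) x' + φ ((s : U →ₗ[K] V) x)) := by
  classical
  obtain ⟨d, hdD, hd0, hDd⟩ : ∃ d ∈ D, d ≠ 0 ∧ ∀ w ∈ D, ∃ c : K, c • d = w := by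
    obtain ⟨⟨d, hd⟩, h0, h⟩ := finrank_eq_one_iff'.mp hD
    refine ⟨d, hd, fun e => h0 (by ext; exact e), fun w hw => ?_⟩
    obtain ⟨c, hc⟩ := h ⟨w, hw⟩
    exact ⟨c, congrArg Subtype.val hc⟩
  have hF : ∀ f : Dual K V, f d ≠ 0 → ∀ s : S, f ∘ₗ (s : U →ₗ[K] V) = 0 → f (F s) = 0 := by
    intro f hf s hs
    obtain ⟨u, hu⟩ := hq s (by
      intro h
      obtain ⟨u, hu⟩ := h hdD
      apply hf
      rw [← hu]
      exact LinearMap.congr_fun hs u)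
    rw [← hu]
    exact LinearMap.congr_fun hs u
  set Sx := Submodule.map (LinearMap.applyₗ x) S with hSx
  obtain ⟨y, hyS, hy0, hyy⟩ : ∃ d ∈ Sx, d ≠ 0 ∧ ∀ w ∈ Sx, ∃ c : K, c • d = w := by
    obtain ⟨⟨d, hd⟩, h0, h⟩ := finrank_eq_one_iff'.mp hx
    refine ⟨d, hd, fun e => h0 (by ext; exact e), fun w hw => ?_⟩
    obtain ⟨c, hc⟩ := h ⟨w, hw⟩
    exact ⟨c, congrArg Subtype.val hc⟩
  obtain ⟨s0, hs0S, hs0⟩ := id hyS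
  have hs0 : s0 x = y := hs0
  have hx0 : x ≠ 0 := by
    rintro rfl
    exact hy0 (by rw [← hs0, map_zero])
  -- quotient
  let X := Submodule.span K {x}
  let j : ((U ⧸ X) →ₗ[K] V) →ₗ[K] (U →ₗ[K] V) := LinearMap.lcomp K V X.mkQ
  have hjinj : Function.Injective j := by
    intro a b hab
    ext u
    exact LinearMap.congr_fun hab u
  have hjr : LinearMap.range j = LinearMap.ker (LinearMap.applyₗ (R := K) (M₂ := V) x) := by
    ext s
    constructor
    · rintro ⟨t, rfl⟩
      have : X.mkQ x = 0 := by
        simp [X]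
      simp only [LinearMap.mem_ker, LinearMap.applyₗ_apply_apply, j, LinearMap.lcomp_apply]
      rw [this, map_zero]
    · intro hs
      have hs : s x = 0 := hs
      refine ⟨X.liftQ s ?_, ?_⟩
      · rw [Submodule.span_le]
        rintro _ rfl
        exact hs
      · ext u; simp [j]
  let S' := S.comap j
  have hfr : finrank K S' + 1 = finrank K S := by
    have e1 : finrank K S' = finrank K (S'.map j) :=
      (Submodule.equivMapOfInjective j hjinj S').finrank_eq
    have e2 := LinearMap.finrank_range_add_finrank_ker
      ((LinearMap.applyₗ (R := K) (M₂ := V) x).domRestrict S)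
    have e3 : LinearMap.range ((LinearMap.applyₗ (R := K) (M₂ := V) x).domRestrict S) = Sx := by
      rw [LinearMap.range_domRestrict]
    have e4 : finrank K (LinearMap.ker ((LinearMap.applyₗ (R := K) (M₂ := V) x).domRestrict S))
        = finrank K (S'.map j) := by
      rw [LinearMap.ker_domRestrict, Submodule.map_comap_eq, hjr, inf_comm,
        ← Submodule.map_comap_subtype]
      exact (Submodule.equivMapOfInjective _ S.subtype_injective _).finrank_eq
    rw [e3, hx] at e2
    omega
  have hdim : finrank K (U →ₗ[K] V) = finrank K ((U ⧸ X) →ₗ[K] V) + finrank K V := by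
    rw [finrank_linearMap, finrank_linearMap]
    have := X.finrank_quotient_add_finrank
    rw [finrank_span_singleton hx0] at this
    rw [← this]
    ring
  obtain ⟨k, hk, hk1, hk2⟩ : ∃ k, finrank K ((U ⧸ X) →ₗ[K] V) ≤ finrank K S' + k ∧
      k + 2 ≤ finrank K V ∧ (Nat.card K = 2 → k + 3 ≤ finrank K V) := by
    refine ⟨finrank K ((U ⧸ X) →ₗ[K] V) - finrank K S', by omega, ?_, ?_⟩
    · have := Submodule.finrank_le S'
      omega
    · intro h
      have := Submodule.finrank_le S'
      have := h2 h
      omega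
  let i : S' →ₗ[K] S := LinearMap.codRestrict S (j ∘ₗ S'.subtype) (fun c => c.2)
  have hi : ∀ s : S, (s : U →ₗ[K] V) x = 0 → ∃ t : S', i t = s := by
    intro s hs
    have : (s : U →ₗ[K] V) ∈ LinearMap.range j := by rw [hjr]; exact hs
    obtain ⟨t, ht⟩ := this
    exact ⟨⟨t, by change j t ∈ S; rw [ht]; exact s.2⟩, Subtype.ext ht⟩
  have hij : ∀ t u, (i t : U →ₗ[K] V) u = (t : (U ⧸ X) →ₗ[K] V) (X.mkQ u) := fun t u => rfl
  obtain ⟨x1, hx1⟩ := quasi_local S' k hk hk1 hk2 (F.comp i.toAddMonoidHom) d hd0 (by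
    intro f hf s hs
    apply hF f hf (i s)
    ext u
    exact LinearMap.congr_fun hs (X.mkQ u))
  obtain ⟨x', rfl⟩ := X.mkQ_surjective x1
  let ev : U → S →+ V := fun z => ((LinearMap.applyₗ (R := K) (M₂ := V) z).domRestrict S).toAddMonoidHom
  let G : S →+ V := F - ev x'
  have hG : ∀ s : S, G s = F s - (s : U →ₗ[K] V) x' := fun s => rfl
  have hG0 : ∀ s : S, (s : U →ₗ[K] V) x = 0 → G s = 0 := by
    intro s hs
    obtain ⟨t, rfl⟩ := hi s hs
    rw [hG, hij, ← hx1, sub_eq_zero]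
    rfl
  obtain ⟨l, hl⟩ : ∃ l : Dual K V, l y = 1 := by
    obtain ⟨l, hl⟩ : ∃ l : Dual K V, l y ≠ 0 := by
      by_contra! h
      exact hy0 ((Module.forall_dual_apply_eq_zero_iff K _).mp h)
    exact ⟨(l y)⁻¹ • l, by simp [hl]⟩
  let s1 : S := ⟨s0, hs0S⟩
  let φ : V →+ V := G.comp (l.smulRight s1).toAddMonoidHom
  have hφ : ∀ s : S, G s = φ ((s : U →ₗ[K] V) x) := by
    intro s
    obtain ⟨c, hc⟩ := hyy ((s : U →ₗ[K] V) x) ⟨s, s.2, rfl⟩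
    have : φ ((s : U →ₗ[K] V) x) = G (c • s1) := by
      simp [φ, ← hc, hl]
    rw [this, ← sub_eq_zero, ← map_sub]
    apply hG0
    simp [s1, hs0, hc]
  have hFφ : ∀ s : S, F s = (s : U →ₗ[K] V) x' + φ ((s : U →ₗ[K] V) x) := by
    intro s
    rw [← hφ, hG]; abel
  by_cases hDS : D = Sx
  · exact Or.inr ⟨hDS, x', φ, hFφ⟩
  left
  have hdy : d ∉ Sx := by
    intro h
    apply hDS
    apply Submodule.eq_of_le_of_finrank_eq
    · intro w hw
      obtain ⟨c, rfl⟩ := hDd w hw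
      exact Sx.smul_mem c h
    · rw [hD, hx]
  have hpres : ∀ w ∈ Sx, φ w ∈ Sx := by
    intro w hw
    by_contra hz
    obtain ⟨H, hH, hHs⟩ := lemA' S' k 0 hk ⊤ (by simp)
    let Y := Sx.dualAnnihilator
    have hY : 1 + finrank K Y = finrank K V := by
      rw [← hx]
      exact Subspace.finrank_add_finrank_dualAnnihilator_eq Sx
    have hcm : finrank K (H.comap Y.subtype) ≤ finrank K H := by
      rw [(Submodule.equivMapOfInjective _ Y.subtype_injective (H.comap Y.subtype)).finrank_eq]
      exact Submodule.finrank_mono (Submodule.map_comap_le _ _)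
    have ev0 : ∀ v : V, v ∉ Sx → (Dual.eval K V v) ∘ₗ Y.subtype ≠ 0 := by
      intro v hv h
      obtain ⟨f, hf, hf'⟩ := Submodule.exists_le_ker_of_notMem hv
      apply hf
      have hfY : f ∈ Y := by
        rw [Submodule.mem_dualAnnihilator]
        exact fun w hw => hf' hw
      exact LinearMap.congr_fun h ⟨f, hfY⟩
    obtain ⟨⟨f, hfY⟩, hfH, hfd, hfz⟩ := avoid (K := K) (W := Y) (H.comap Y.subtype) (by omega)
      (by intro h; have := hk2 h; omega) _ _ (ev0 d hdy) (ev0 _ hz)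
    have hfd : f d ≠ 0 := hfd
    have hfz : f (φ w) ≠ 0 := hfz
    have hfH : f ∉ H := hfH
    rw [Submodule.mem_dualAnnihilator] at hfY
    obtain ⟨s, hs, hsw⟩ := id hw
    have hsw : s x = w := hsw
    obtain ⟨t, htS, -, ht⟩ := hHs f hfH (X.liftQ (f ∘ₗ s) (by
      rw [Submodule.span_le]
      rintro _ rfl
      change f (s _) = 0
      rw [hsw]
      exact hfY w hw))
    let r : S := ⟨s, hs⟩ - i ⟨t, htS⟩
    have hrx : (r : U →ₗ[K] V) x = w := by
      have : (r : U →ₗ[K] V) x = s x - t (X.mkQ x) := rfl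
      have h0 : X.mkQ x = 0 := by simp [X]
      rw [this, h0, map_zero, sub_zero, hsw]
    have hr0 : f ∘ₗ (r : U →ₗ[K] V) = 0 := by
      ext u
      have e1 : (r : U →ₗ[K] V) u = s u - t (X.mkQ u) := rfl
      have e2 := LinearMap.congr_fun ht (X.mkQ u)
      simp only [LinearMap.comp_apply, e1, map_sub, LinearMap.zero_apply]
      simp at e2 ⊢
      rw [e2, sub_self]
    have e3 := hF f hfd r hr0
    rw [hFφ, map_add, hrx] at e3
    have e4 : f ((r : U →ₗ[K] V) x') = 0 := LinearMap.congr_fun hr0 x'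
    rw [e4, zero_add] at e3
    exact hfz e3
  refine ⟨x', φ, hpres, ?_, hFφ⟩
  intro hlin
  apply hnl
  obtain ⟨m, hm⟩ := hyy _ (hpres y hyS)
  refine ⟨x' + m • x, fun s => ?_⟩
  obtain ⟨c, hc⟩ := hyy ((s : U →ₗ[K] V) x) ⟨s, s.2, rfl⟩
  rw [hFφ, map_add, map_smul, ← hc, hlin c y hyS, ← hm, smul_comm]
end

section
/- Let U and V be finite-dimensional vector spaces over the field K with exactly 2 elements, and S a linear subspace of L(U,V) with codim S ≤ 2·dim V − 5. Assume there is a vector x ∈ U with dim Sx = 2, where Sx = {s(x) : s ∈ S}, and let F : S → V be an additive group homomorphism that is non-local and quasi-range-compatible with respect to some 1-dimensional linear subspace D of V. Then (a) D ⊆ Sx, and (b) F is the sum of a local map and a map of the form s ↦ φ(s(x)), where φ is a K-linear idempotent endomorphism of Sx of rank 1 whose kernel and image both differ from D. -/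
open Module

theorem qx_factor {K A B C : Type*} [Field K] [AddCommGroup A] [Module K A]
    [AddCommGroup B] [Module K B] [AddCommGroup C] [Module K C]
    (p : A →ₗ[K] B) (G : A →ₗ[K] C) (h : ∀ a, p a = 0 → G a = 0) :
    ∃ φ : B →ₗ[K] C, ∀ a, G a = φ (p a) := by
  obtain ⟨g, hg⟩ := p.rangeRestrict.exists_rightInverse_of_surjective
    (LinearMap.range_rangeRestrict p)
  obtain ⟨φ, hφ⟩ := LinearMap.exists_extend (G ∘ₗ g)
  refine ⟨φ, fun a => ?_⟩
  have h1 : φ (p a) = G (g (p.rangeRestrict a)) := by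
    have := LinearMap.congr_fun hφ (p.rangeRestrict a)
    simpa using this
  have h2 : p (g (p.rangeRestrict a)) = p a := by
    have := LinearMap.congr_fun hg (p.rangeRestrict a)
    simpa using congrArg Subtype.val this
  have h3 := h (g (p.rangeRestrict a) - a) (by rw [map_sub, h2, sub_self])
  rw [map_sub, sub_eq_zero] at h3
  rw [h1, h3]

theorem qx_avoid {K V : Type*} [Field K] [AddCommGroup V] [Module K V]
    (R : Submodule K V) (a b : V) (ha : a ∉ R) (hb : b ∉ R) :
    ∃ f : Dual K V, (∀ r ∈ R, f r = 0) ∧ f a ≠ 0 ∧ f b ≠ 0 := by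
  obtain ⟨f, hf, hfR⟩ := Submodule.exists_le_ker_of_notMem ha
  obtain ⟨g, hg, hgR⟩ := Submodule.exists_le_ker_of_notMem hb
  by_cases h1 : f b = 0
  · by_cases h2 : g a = 0
    · refine ⟨f + g, fun r hr => ?_, ?_, ?_⟩
      · have := hfR hr; have := hgR hr
        simp_all
      · simpa [h2] using hf
      · simpa [h1] using hg
    · exact ⟨g, fun r hr => hgR hr, h2, hg⟩
  · exact ⟨f, fun r hr => hfR hr, hf, h1⟩

theorem qx_reflex {K U : Type*} [Field K] [AddCommGroup U] [Module K U] [FiniteDimensional K U]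
    (l : Dual K (Dual K U)) : ∃ u : U, ∀ g : Dual K U, l g = g u := by
  obtain ⟨u, hu⟩ := (Module.evalEquiv K U).surjective l
  exact ⟨u, fun g => by rw [← hu]; rfl⟩

theorem qx_sep {K U V : Type*} [Field K]
    [AddCommGroup U] [Module K U] [FiniteDimensional K U]
    [AddCommGroup V] [Module K V]
    (S : Submodule K (U →ₗ[K] V)) (x : U) (s0 : U →ₗ[K] V) (hs0 : s0 ∈ S) (f : Dual K V)
    (h : ∀ s ∈ S, s x = s0 x → f ∘ₗ s ≠ 0) :
    ∃ u : U, (∀ s ∈ S, s x = 0 → f (s u) = 0) ∧ f (s0 u) ≠ 0 := by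
  let M : Submodule K (Dual K U) :=
    (S ⊓ LinearMap.ker (LinearMap.applyₗ (R := K) (M₂ := V) x)).map (LinearMap.compRight K f)
  have hM : f ∘ₗ s0 ∉ M := by
    rintro ⟨s, ⟨hs, hsx⟩, hs2⟩
    have hsx' : s x = 0 := hsx
    have hs2' : f ∘ₗ s = f ∘ₗ s0 := hs2
    apply h (s0 - s) (S.sub_mem hs0 hs)
    · simp [hsx']
    · rw [LinearMap.comp_sub, hs2', sub_self]
  obtain ⟨l, hl, hlM⟩ := Submodule.exists_le_ker_of_notMem hM
  obtain ⟨u, hu⟩ := qx_reflex l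
  refine ⟨u, fun s hs hsx => ?_, ?_⟩
  · have : l (f ∘ₗ s) = 0 := hlM ⟨s, ⟨hs, hsx⟩, rfl⟩
    rw [hu] at this; exact this
  · rw [hu] at hl; exact hl

theorem qx_card {K U V ι : Type*} [Field K] [Fintype ι]
    [AddCommGroup U] [Module K U] [FiniteDimensional K U]
    [AddCommGroup V] [Module K V] [FiniteDimensional K V]
    (T : Submodule K (U →ₗ[K] V)) (f : ι → Dual K V) (hf : LinearIndependent K f)
    (u : ι → U) (hu : ∀ i, u i ≠ 0) (h : ∀ i, ∀ t ∈ T, f i (t (u i)) = 0) :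
    Fintype.card ι + finrank K T ≤ finrank K (U →ₗ[K] V) := by
  let l : ι → Dual K (U →ₗ[K] V) := fun i => f i ∘ₗ LinearMap.applyₗ (u i)
  have hl : LinearIndependent K l := by
    rw [Fintype.linearIndependent_iff] at hf ⊢
    intro c hc i
    have hc' : ∀ t : U →ₗ[K] V, ∑ i, c i * f i (t (u i)) = 0 := by
      intro t
      have := LinearMap.congr_fun hc t
      simpa [l] using this
    obtain ⟨g, hg⟩ : ∃ g : Dual K U, g (u i) ≠ 0 := by
      by_contra! hh
      exact hu i ((Module.forall_dual_apply_eq_zero_iff K _).1 hh)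
    have h2 : ∑ j, (c j * g (u j)) • f j = 0 := by
      ext v
      have := hc' (g.smulRight v)
      simp only [LinearMap.smulRight_apply, map_smul, smul_eq_mul] at this
      simpa [mul_assoc] using this
    have := hf _ h2 i
    exact (mul_eq_zero.1 this).resolve_right hg
  have h1 := finrank_span_eq_card hl
  have h3 : Submodule.span K (Set.range l) ≤ T.dualAnnihilator := by
    rw [Submodule.span_le]
    rintro _ ⟨i, rfl⟩
    refine (Submodule.mem_dualAnnihilator _).2 ?_
    intro t ht
    exact h i t ht
  have h4 := Submodule.finrank_mono h3
  have h2 := Subspace.finrank_add_finrank_dualAnnihilator_eq T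
  omega

theorem qx_card2 {K U V : Type*} [Field K]
    [AddCommGroup U] [Module K U] [FiniteDimensional K U]
    [AddCommGroup V] [Module K V] [FiniteDimensional K V]
    (T : Submodule K (U →ₗ[K] V)) (A : Set (Dual K V))
    (h : ∀ f ∈ A, ∃ u : U, u ≠ 0 ∧ ∀ t ∈ T, f (t u) = 0) :
    finrank K (Submodule.span K A) + finrank K T ≤ finrank K (U →ₗ[K] V) := by
  obtain ⟨b, hbA, hb, hli⟩ := exists_linearIndependent K A
  have : Finite b := hli.setFinite
  have := Fintype.ofFinite b
  choose u hu0 hu using fun i : b => h i.1 (hbA i.2)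
  have h1 := qx_card T (fun i : b => (i : Dual K V)) hli u hu0 hu
  have h2 := finrank_span_eq_card hli
  rw [Subtype.range_coe, hb] at h2
  change finrank K (Submodule.span K A) = Fintype.card b at h2
  omega

theorem qx_pair {K V : Type*} [Field K] [AddCommGroup V] [Module K V] (a b : V) :
    finrank K (Submodule.span K {a, b}) ≤ 2 := by
  classical
  have h := finrank_span_finset_le_card (R := K) ({a, b} : Finset V)
  rw [Finset.coe_insert, Finset.coe_singleton] at h
  exact h.trans Finset.card_le_two

/-- rank-one ext -/
theorem qx_local_of_rank_one {K U V : Type*} [Field K]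
    [AddCommGroup U] [Module K U] [FiniteDimensional K U]
    [AddCommGroup V] [Module K V]
    (F : (U →ₗ[K] V) →ₗ[K] V) (u : U) (h : ∀ (g : Dual K U) (w : V), F (g.smulRight w) = g u • w)
    (s : U →ₗ[K] V) : F s = s u := by
  let b := Module.finBasis K U
  have hs : s = ∑ i, (b.coord i).smulRight (s (b i)) := by
    apply b.ext
    intro j
    simp [LinearMap.sum_apply, Finsupp.single_apply]
  conv_lhs => rw [hs]
  rw [map_sum]
  simp only [h]
  conv_rhs => rw [← b.sum_repr u, map_sum]
  simp

theorem qx_exists_notMem {K V : Type*} [Field K] [AddCommGroup V] [Module K V] 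
    (n : Finset V) (h : n.card < finrank K V) : ∃ v, v ∉ Submodule.span K (n : Set V) := by
  by_contra! hh
  have : Submodule.span K (n : Set V) = ⊤ := by
    rw [eq_top_iff]; intro v _; exact hh v
  have h2 := finrank_span_finset_le_card (R := K) n
  rw [Set.finrank, this, finrank_top] at h2
  omega

theorem qx_top {K U V : Type*} [Field K] (hK : ∀ c : K, c = 0 ∨ c = 1)
    [AddCommGroup U] [Module K U] [FiniteDimensional K U]
    [AddCommGroup V] [Module K V] 
    (hn : 3 ≤ finrank K V) (F : (U →ₗ[K] V) →ₗ[K] V) (d : V) (hd : d ≠ 0)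
    (hq : ∀ s : U →ₗ[K] V, d ∉ LinearMap.range s → F s ∈ LinearMap.range s) :
    ∃ u : U, ∀ s, F s = s u := by
  classical
  have key : ∀ w : V, d ∉ Submodule.span K {w} → w ≠ 0 →
      ∃ u : U, ∀ g : Dual K U, F (g.smulRight w) = g u • w := by
    intro w hw hw0
    obtain ⟨f, hf⟩ : ∃ f : Dual K V, f w ≠ 0 := by
      by_contra! hh
      exact hw0 ((Module.forall_dual_apply_eq_zero_iff K _).1 hh)
    have hf1 : f w = 1 := (hK _).resolve_left hf
    obtain ⟨u, hu⟩ := qx_reflex (f ∘ₗ F ∘ₗ (LinearMap.smulRightₗ (M₂ := U) (R := K)).flip w)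
    refine ⟨u, fun g => ?_⟩
    have hr : LinearMap.range (g.smulRight w) ≤ Submodule.span K {w} := by
      rintro _ ⟨z, rfl⟩
      exact Submodule.smul_mem _ _ (Submodule.mem_span_singleton_self w)
    have h1 := hr (hq (g.smulRight w) (fun hd => hw (hr hd)))
    obtain ⟨c, hc⟩ := Submodule.mem_span_singleton.1 h1
    have h2 := hu g
    have h3 : f (F (g.smulRight w)) = g u := h2
    rw [← hc, map_smul, hf1, smul_eq_mul, mul_one] at h3
    rw [← hc, h3]
  have swap : ∀ w : V, w ∉ Submodule.span K {d} → w ≠ 0 ∧ d ∉ Submodule.span K {w} := by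
    intro w hw
    refine ⟨fun h => hw (by rw [h]; exact Submodule.zero_mem _), fun h => ?_⟩
    obtain ⟨c, hc⟩ := Submodule.mem_span_singleton.1 h
    rcases hK c with rfl | rfl
    · exact hd (by simpa using hc.symm)
    · exact hw (by rw [one_smul] at hc; rw [hc]; exact Submodule.mem_span_singleton_self _)
  obtain ⟨w0, hw0⟩ := qx_exists_notMem (K := K) {d} (by simp; omega)
  simp only [Finset.coe_singleton] at hw0
  obtain ⟨u0, hu0⟩ := key w0 (swap w0 hw0).2 (swap w0 hw0).1
  have hout : ∀ w, w ∉ Submodule.span K {d, w0} → ∀ g : Dual K U,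
      F (g.smulRight w) = g u0 • w := by
    intro w hw
    have hdle : Submodule.span K {d} ≤ Submodule.span K {d, w0} :=
      Submodule.span_mono (by simp)
    have hw0m : w0 ∈ Submodule.span K {d, w0} := Submodule.subset_span (by simp)
    have h1 := swap w (fun h => hw (hdle h))
    have h2 := swap (w + w0) (fun h => hw (by
      have := Submodule.sub_mem _ (hdle h) hw0m
      simpa using this))
    obtain ⟨u1, hu1⟩ := key w h1.2 h1.1
    obtain ⟨u2, hu2⟩ := key _ h2.2 h2.1
    intro g
    have e1 : g.smulRight (w + w0) = g.smulRight w + g.smulRight w0 := by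
      ext z; simp
    have e2 := hu2 g
    rw [e1, map_add, hu1, hu0] at e2
    have e3 : (g u1 - g u2) • w = (g u2 - g u0) • w0 := by
      rw [sub_smul, sub_smul, sub_eq_sub_iff_add_eq_add, e2, smul_add]; abel
    have e4 : g u1 - g u2 = 0 := by
      by_contra hne
      have h1 := (hK (g u1 - g u2)).resolve_left hne
      rw [h1, one_smul] at e3
      exact hw (by rw [e3]; exact Submodule.smul_mem _ _ hw0m)
    have e5 : g u2 - g u0 = 0 := by
      rw [e4, zero_smul] at e3
      exact (smul_eq_zero.1 e3.symm).resolve_right (swap w0 hw0).1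
    rw [hu1, sub_eq_zero.1 e4, sub_eq_zero.1 e5]
  obtain ⟨y, hy⟩ := qx_exists_notMem (K := K) {d, w0}
    (lt_of_le_of_lt Finset.card_le_two (by omega))
  simp only [Finset.coe_insert, Finset.coe_singleton] at hy
  refine ⟨u0, qx_local_of_rank_one F u0 fun g w => ?_⟩
  by_cases hw : w ∈ Submodule.span K {d, w0}
  · have h1 := hout y hy g
    have h2 := hout (w + y) (fun h => hy (by
      have := Submodule.sub_mem _ h hw
      simpa using this)) g
    have e1 : g.smulRight (w + y) = g.smulRight w + g.smulRight y := by
      ext z; simp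
    rw [e1, map_add, h1, smul_add] at h2
    exact add_right_cancel h2
  · exact hout w hw g

theorem qx_two_out {K V : Type*} [Field K] [AddCommGroup V] [Module K V]
    (hn : 3 ≤ finrank K V) (N : Submodule K V) (hN : N ≠ ⊤) (d : V) :
    ∃ v1 v2 : V, v1 ∉ N ∧ v2 ∉ N ∧ v1 ∉ Submodule.span K {v2} ∧ v1 ≠ d ∧ v2 ≠ d := by
  classical
  obtain ⟨a, ha⟩ : ∃ a, a ∉ N := by
    by_contra! h
    exact hN (eq_top_iff.2 fun v _ => h v)
  have step : ∀ n : Finset V, n.card < 3 → a ∈ n →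
      ∃ v, v ∉ N ∧ v ∉ Submodule.span K (n : Set V) := by
    intro n hc han
    obtain ⟨v, hv⟩ := qx_exists_notMem (K := K) n (by omega)
    by_cases h : v ∈ N
    · refine ⟨v + a, fun h2 => ha (by simpa using N.sub_mem h2 h), fun h2 => hv ?_⟩
      have := Submodule.sub_mem _ h2 (Submodule.subset_span (R := K) (Finset.mem_coe.2 han))
      simpa using this
    · exact ⟨v, h, hv⟩
  obtain ⟨b, hbN, hb⟩ := step {a} (by simp) (by simp)
  obtain ⟨c, hcN, hc⟩ := step {a, b} (lt_of_le_of_lt Finset.card_le_two (by omega)) (by simp)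
  simp only [Finset.coe_insert, Finset.coe_singleton] at hb hc
  have hca : c ∉ Submodule.span K {a} := fun h => hc (Submodule.span_mono (by simp) h)
  have hcb : c ∉ Submodule.span K {b} := fun h => hc (Submodule.span_mono (by simp) h)
  by_cases h1 : c = d
  · refine ⟨b, a, hbN, ha, hb, ?_, ?_⟩
    · rintro rfl; exact hcb (by rw [h1]; exact Submodule.mem_span_singleton_self _)
    · rintro rfl; exact hca (by rw [h1]; exact Submodule.mem_span_singleton_self _)
  · by_cases h2 : b = d
    · refine ⟨c, a, hcN, ha, hca, h1, ?_⟩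
      rintro rfl; exact hb (by rw [h2]; exact Submodule.mem_span_singleton_self _)
    · exact ⟨c, b, hcN, hbN, hcb, h1, h2⟩

theorem qx_notMem_span {K V : Type*} [Field K] (hK : ∀ c : K, c = 0 ∨ c = 1)
    [AddCommGroup V] [Module K V] (d v : V) (hd : d ≠ 0) (hv : v ≠ d) :
    d ∉ Submodule.span K {v} := by
  intro h
  obtain ⟨c, hc⟩ := Submodule.mem_span_singleton.1 h
  rcases hK c with rfl | rfl
  · exact hd (by simpa using hc.symm)
  · exact hv (by simpa using hc)

universe u v

theorem qx_A {K : Type*} {U : Type u} [Field K] (hK : ∀ c : K, c = 0 ∨ c = 1)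
    [AddCommGroup U] [Module K U] [FiniteDimensional K U] (n : ℕ) :
    ∀ (V : Type v) [AddCommGroup V] [Module K V] [FiniteDimensional K V], finrank K V = n →
    ∀ (S : Submodule K (U →ₗ[K] V)),
      finrank K (U →ₗ[K] V) + 3 ≤ finrank K S + finrank K V →
    ∀ (F : S →ₗ[K] V) (d : V), d ≠ 0 →
      (∀ s : S, d ∉ LinearMap.range (s : U →ₗ[K] V) → F s ∈ LinearMap.range (s : U →ₗ[K] V)) →
      ∃ u : U, ∀ s : S, F s = (s : U →ₗ[K] V) u := by
  induction n with
  | zero =>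
    intro V _ _ _ hV S hS
    have := Submodule.finrank_le S
    omega
  | succ n ih =>
    intro V _ _ _ hV S hS F d hd hq
    have hle := Submodule.finrank_le S
    by_cases hT : S = ⊤
    · subst hT
      obtain ⟨u, hu⟩ := qx_top hK (by omega) (F ∘ₗ Submodule.topEquiv.symm.toLinearMap) d hd
        (fun s hs => hq ⟨s, trivial⟩ hs)
      exact ⟨u, fun s => hu s⟩
    let N : Submodule K V :=
      { carrier := {v | ∀ g : Dual K U, g.smulRight v ∈ S}
        zero_mem' := fun g => by
          have : g.smulRight (0 : V) = 0 := by ext; simp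
          rw [this]; exact S.zero_mem
        add_mem' := fun {a b} ha hb g => by
          have : g.smulRight (a + b) = g.smulRight a + g.smulRight b := by ext; simp
          rw [this]; exact S.add_mem (ha g) (hb g)
        smul_mem' := fun c a ha g => by
          have : g.smulRight (c • a) = c • g.smulRight a := by
            ext z; exact smul_comm _ _ _
          rw [this]; exact S.smul_mem _ (ha g) }
    have hN : N ≠ ⊤ := by
      intro h
      apply hT
      rw [eq_top_iff]
      intro s _
      let b := Module.finBasis K U
      have hs : s = ∑ i, (b.coord i).smulRight (s (b i)) := by
        apply b.ext
        intro j
        simp [LinearMap.sum_apply, Finsupp.single_apply]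
      rw [hs]
      refine S.sum_mem fun i _ => ?_
      have : s (b i) ∈ N := by rw [h]; trivial
      exact this _
    have desc : ∀ v : V, v ∉ N → v ≠ d → ∃ u : U, ∀ s : S,
        F s - (s : U →ₗ[K] V) u ∈ Submodule.span K {v} := by
      intro v hvN hvd
      have hv0 : v ≠ 0 := fun h => hvN (by rw [h]; exact N.zero_mem)
      have hdv := qx_notMem_span hK d v hd hvd
      have hfr : finrank K (V ⧸ Submodule.span K {v}) + 1 = finrank K V := by
        rw [← finrank_span_singleton (K := K) hv0]
        exact Submodule.finrank_quotient_add_finrank _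
      let π : V →ₗ[K] (V ⧸ Submodule.span K {v}) := (Submodule.span K {v}).mkQ
      let q : (U →ₗ[K] V) →ₗ[K] (U →ₗ[K] (V ⧸ Submodule.span K {v})) := LinearMap.compRight K π
      have hqa : ∀ t z, q t z = π (t z) := fun t z => rfl
      have hπ : ∀ z, π z = 0 ↔ z ∈ Submodule.span K {v} := fun z =>
        Submodule.Quotient.mk_eq_zero _
      have hqs : LinearMap.range q = ⊤ := by
        rw [LinearMap.range_eq_top]
        intro t
        obtain ⟨r, hr⟩ := π.exists_rightInverse_of_surjective (Submodule.range_mkQ _)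
        refine ⟨r ∘ₗ t, ?_⟩
        ext z
        exact LinearMap.congr_fun hr (t z)
      have r1 := LinearMap.finrank_range_add_finrank_ker q
      rw [hqs, finrank_top] at r1
      have r2 := LinearMap.finrank_range_add_finrank_ker (q.domRestrict S)
      have r3 : LinearMap.range (q.domRestrict S) = S.map q := by
        rw [LinearMap.range_domRestrict]
      rw [r3] at r2
      have r4 : finrank K (LinearMap.ker (q.domRestrict S)) < finrank K (LinearMap.ker q) := by
        have e : (LinearMap.ker (q.domRestrict S)).map S.subtype = S ⊓ LinearMap.ker q := by
          ext t
          simp only [Submodule.mem_map, LinearMap.mem_ker, Submodule.mem_inf]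
          constructor
          · rintro ⟨y, hy, rfl⟩; exact ⟨y.2, hy⟩
          · rintro ⟨h1, h2⟩; exact ⟨⟨t, h1⟩, h2, rfl⟩
        have e2 := Submodule.finrank_map_subtype_eq S (LinearMap.ker (q.domRestrict S))
        rw [← e2, e]
        apply Submodule.finrank_lt_finrank_of_lt
        refine lt_of_le_of_ne inf_le_right fun h => hvN fun g => ?_
        have hg : g.smulRight v ∈ LinearMap.ker q := by
          rw [LinearMap.mem_ker]
          ext z
          exact (hπ _).2 (Submodule.smul_mem _ _ (Submodule.mem_span_singleton_self v))
        rw [← h] at hg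
        exact hg.1
      obtain ⟨F', hF'⟩ := qx_factor (q.domRestrict S) (π ∘ₗ F) (by
        intro s hs
        have hr : LinearMap.range (s : U →ₗ[K] V) ≤ Submodule.span K {v} := by
          rintro _ ⟨z, rfl⟩
          exact (hπ _).1 (LinearMap.congr_fun hs z)
        exact (hπ _).2 (hr (hq s fun h => hdv (hr h))))
      obtain ⟨u, hu⟩ := ih (V ⧸ Submodule.span K {v}) (by omega) (S.map q) (by omega)
        (F' ∘ₗ (S.map q).subtype) (π d) (fun h => hdv ((hπ _).1 h)) (by
          rintro ⟨_, ⟨s, hs, rfl⟩⟩ hds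
          have h1 : d ∉ LinearMap.range s := by
            rintro ⟨z, hz⟩
            exact hds ⟨z, by rw [← hz]; rfl⟩
          obtain ⟨z, hz⟩ := hq ⟨s, hs⟩ h1
          refine ⟨z, ?_⟩
          have := hF' ⟨s, hs⟩
          change π (s z) = F' (q s)
          change π (F ⟨s, hs⟩) = F' (q s) at this
          rw [← this, ← hz])
      refine ⟨u, fun s => ?_⟩
      rw [← hπ, map_sub, sub_eq_zero]
      have h1 := hF' s
      have h2 := hu ⟨q s, ⟨s, s.2, rfl⟩⟩
      change π (F s) = F' (q s) at h1
      change F' (q s) = π ((s : U →ₗ[K] V) u) at h2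
      rw [h1, h2]
    obtain ⟨v1, v2, hv1, hv2, h12, hd1, hd2⟩ := qx_two_out (by omega) N hN d
    obtain ⟨u1, hu1⟩ := desc v1 hv1 hd1
    obtain ⟨u2, hu2⟩ := desc v2 hv2 hd2
    have hv10 : v1 ≠ 0 := fun h => hv1 (by rw [h]; exact N.zero_mem)
    by_cases hu : u1 = u2
    · subst hu
      refine ⟨u1, fun s => ?_⟩
      obtain ⟨c, hc⟩ := Submodule.mem_span_singleton.1 (hu1 s)
      rcases hK c with rfl | rfl
      · rw [zero_smul] at hc
        exact sub_eq_zero.1 hc.symm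
      · rw [one_smul] at hc
        exact absurd (by rw [hc]; exact hu2 s) h12
    exfalso
    let E := Submodule.span K {v1, v2}
    have hE : ∀ s ∈ S, s (u1 - u2) ∈ E := by
      intro s hs
      have h1 := (Submodule.span_mono (by simp) : Submodule.span K {v1} ≤ E) (hu1 ⟨s, hs⟩)
      have h2 := (Submodule.span_mono (by simp) : Submodule.span K {v2} ≤ E) (hu2 ⟨s, hs⟩)
      have := E.sub_mem h2 h1
      simpa using this
    have hEd : finrank K E ≤ 2 := qx_pair v1 v2
    -- use qx_card
    have hb := qx_card2 S (E.dualAnnihilator : Set (Dual K V))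
      (fun f hf => ⟨u1 - u2, sub_ne_zero.2 hu, fun t ht =>
        (Submodule.mem_dualAnnihilator _).1 hf _ (hE t ht)⟩)
    rw [Submodule.span_eq] at hb
    have h2 := Subspace.finrank_add_finrank_dualAnnihilator_eq E
    omega

theorem qx_P {K U V : Type*} [Field K] (hK : ∀ c : K, c = 0 ∨ c = 1)
    [AddCommGroup U] [Module K U] [FiniteDimensional K U]
    [AddCommGroup V] [Module K V] [FiniteDimensional K V]
    (S : Submodule K (U →ₗ[K] V)) (x : U)
    (hT : finrank K ((U ⧸ Submodule.span K {x}) →ₗ[K] V) + 3 ≤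
      finrank K (S.comap (LinearMap.lcomp K V (Submodule.span K {x}).mkQ)) + finrank K V)
    (s0 : U →ₗ[K] V) (hs0 : s0 ∈ S) (d b : V)
    (hd : d ∉ Submodule.span K {s0 x}) (hb : b ∉ Submodule.span K {s0 x}) :
    ∃ s ∈ S, s x = s0 x ∧ d ∉ LinearMap.range s ∧ b ∉ LinearMap.range s := by
  by_contra! hcon
  let A : Set (Dual K V) := {f | f (s0 x) = 0 ∧ f d ≠ 0 ∧ f b ≠ 0}
  have hA : ∀ f ∈ A, ∃ u : U ⧸ Submodule.span K {x}, u ≠ 0 ∧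
      ∀ t ∈ S.comap (LinearMap.lcomp K V (Submodule.span K {x}).mkQ), f (t u) = 0 := by
    rintro f ⟨hf0, hfd, hfb⟩
    obtain ⟨u, hu, hu0⟩ := qx_sep S x s0 hs0 f (by
      intro s hs hsx hf
      have h0 : ∀ z, f (s z) = 0 := fun z => LinearMap.congr_fun hf z
      obtain ⟨z, hz⟩ := hcon s hs hsx (by rintro ⟨z, rfl⟩; exact hfd (h0 z))
      exact hfb (by rw [← hz]; exact h0 z))
    refine ⟨(Submodule.span K {x}).mkQ u, fun h => ?_, fun t ht => ?_⟩
    · obtain ⟨c, rfl⟩ := Submodule.mem_span_singleton.1 ((Submodule.Quotient.mk_eq_zero _).1 h)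
      exact hu0 (by rw [map_smul, map_smul, hf0, smul_zero])
    · refine hu (t ∘ₗ (Submodule.span K {x}).mkQ) ht ?_
      have : (Submodule.span K {x}).mkQ x = 0 :=
        (Submodule.Quotient.mk_eq_zero _).2 (Submodule.mem_span_singleton_self x)
      rw [LinearMap.comp_apply, this, map_zero]
  have h1 := qx_card2 _ A hA
  have h2 := Subspace.finrank_add_finrank_dualCoannihilator_eq (Submodule.span K A)
  obtain ⟨f0, hf0R, hf0d, hf0b⟩ := qx_avoid _ d b hd hb
  have hf0p := hf0R _ (Submodule.mem_span_singleton_self _)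
  have h3 : (Submodule.span K A).dualCoannihilator ≤ Submodule.span K {s0 x, d - b} := by
    intro v hv
    have hv' : ∀ f ∈ A, f v = 0 := fun f hf =>
      (Submodule.mem_dualCoannihilator _).1 hv f (Submodule.subset_span hf)
    by_contra hvn
    obtain ⟨f, hf, hfR⟩ := Submodule.exists_le_ker_of_notMem hvn
    have e1 : f (s0 x) = 0 := hfR (Submodule.subset_span (by simp))
    have e2 : f (d - b) = 0 := hfR (Submodule.subset_span (by simp))
    rw [map_sub, sub_eq_zero] at e2
    by_cases h : f d = 0
    · have := hv' (f + f0) ⟨by simp [e1, hf0p], by simpa [h] using hf0d,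
        by simpa [← e2, h] using hf0b⟩
      have h5 := hv' f0 ⟨hf0p, hf0d, hf0b⟩
      exact hf (by simpa [h5] using this)
    · exact hf (hv' f ⟨e1, h, by rwa [← e2]⟩)
  have h4 := (Submodule.finrank_mono h3).trans (qx_pair _ _)
  omega

/-- Let `K` be the field with exactly 2 elements, `S` a linear subspace
of `L(U,V)` with `codim S ≤ 2 dim V − 5`, and `x ∈ U` with `dim Sx = 2` (where
`Sx = Submodule.map (LinearMap.applyₗ x) S`). Let `F : S → V` be a non-local additive
homomorphism that is quasi-range-compatible with respect to a 1-dimensional subspace `D`.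
Then (a) `D ⊆ Sx`, and (b) `F` is the sum of a local map and `s ↦ φ (s x)` where `φ` is a
`K`-linear idempotent endomorphism of `Sx` (encoded as a linear map `V →ₗ[K] V`
preserving `Sx` and idempotent on it) whose image has dimension 1 and whose kernel and
image (within `Sx`) both differ from `D`. -/
theorem quasi_range_compatible_hom_special_type_two_card_two
    (K U V : Type*) [Field K] (hK : Nat.card K = 2)
    [AddCommGroup U] [Module K U] [FiniteDimensional K U]
    [AddCommGroup V] [Module K V] [FiniteDimensional K V]
    (S : Submodule K (U →ₗ[K] V))
    (h1 : Module.finrank K (U →ₗ[K] V) + 5 ≤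
      Module.finrank K S + 2 * Module.finrank K V)
    (x : U)
    (hx : Module.finrank K (Submodule.map (LinearMap.applyₗ x) S) = 2)
    (F : ↥S →+ V)
    (hnl : ¬ ∃ y : U, ∀ s : ↥S, F s = (s : U →ₗ[K] V) y)
    (D : Submodule K V) (hD : Module.finrank K D = 1)
    (hq : ∀ s : ↥S, ¬ D ≤ LinearMap.range (s : U →ₗ[K] V) →
      F s ∈ LinearMap.range (s : U →ₗ[K] V)) :
    D ≤ Submodule.map (LinearMap.applyₗ x) S ∧
    ∃ (x' : U) (φ : V →ₗ[K] V),
      (∀ y ∈ Submodule.map (LinearMap.applyₗ x) S,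
        φ y ∈ Submodule.map (LinearMap.applyₗ x) S) ∧
      (∀ y ∈ Submodule.map (LinearMap.applyₗ x) S, φ (φ y) = φ y) ∧
      Module.finrank K (Submodule.map φ (Submodule.map (LinearMap.applyₗ x) S)) = 1 ∧
      Submodule.map φ (Submodule.map (LinearMap.applyₗ x) S) ≠ D ∧
      Submodule.map (LinearMap.applyₗ x) S ⊓ LinearMap.ker φ ≠ D ∧
      ∀ s : ↥S, F s = (s : U →ₗ[K] V) x' + φ ((s : U →ₗ[K] V) x) := by
  
  classical
  have hK2 : ∀ c : K, c = 0 ∨ c = 1 := by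
    intro c
    obtain ⟨a, b, hab, hu⟩ := Nat.card_eq_two_iff.1 hK
    have hm : ∀ z : K, z = a ∨ z = b := fun z => by
      have : z ∈ ({a, b} : Set K) := by rw [hu]; trivial
      simpa using this
    have h01 : (0 : K) ≠ 1 := zero_ne_one
    rcases hm c with h | h <;> rcases hm 0 with h' | h' <;> rcases hm 1 with h'' | h'' <;>
      simp_all
  have hch : (1 : K) + 1 = 0 := by
    rcases hK2 (1 + 1) with h | h
    · exact h
    · simp at h
  have hVV : ∀ v : V, v + v = 0 := by
    intro v
    have : ((1 : K) + 1) • v = v + v := by rw [add_smul, one_smul]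
    rw [← this, hch, zero_smul]
  let FL : S →ₗ[K] V :=
    { toFun := F
      map_add' := F.map_add
      map_smul' := fun c s => by
        rcases hK2 c with rfl | rfl <;> simp }
  have hFL : ∀ s, FL s = F s := fun _ => rfl
  obtain ⟨d, hdD, hd0⟩ : ∃ d ∈ D, d ≠ 0 :=
    Submodule.exists_mem_ne_zero_of_ne_bot (by rintro rfl; simp at hD)
  have hDd : D = Submodule.span K {d} := by
    symm
    apply Submodule.eq_of_le_of_finrank_eq
    · rw [Submodule.span_singleton_le_iff_mem]; exact hdD
    · rw [hD, finrank_span_singleton hd0]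
  have hDR : ∀ R : Submodule K V, D ≤ R ↔ d ∈ R := fun R => by
    rw [hDd, Submodule.span_singleton_le_iff_mem]
  have hDm : ∀ z ∈ D, z = 0 ∨ z = d := by
    intro z hz
    rw [hDd] at hz
    obtain ⟨c, rfl⟩ := Submodule.mem_span_singleton.1 hz
    rcases hK2 c with rfl | rfl <;> simp
  have hq' : ∀ s : S, d ∉ LinearMap.range (s : U →ₗ[K] V) →
      F s ∈ LinearMap.range (s : U →ₗ[K] V) := fun s hs => hq s (by rwa [hDR])
  have hx0 : x ≠ 0 := by
    rintro rfl
    rw [map_zero, Submodule.map_zero] at hx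
    simp at hx
  set P := Submodule.map (LinearMap.applyₗ (R := K) (M₂ := V) x) S with hP
  have hmP : ∀ z, z ∈ P ↔ ∃ s : S, (s : U →ₗ[K] V) x = z := by
    intro z
    constructor
    · rintro ⟨s, hs, rfl⟩; exact ⟨⟨s, hs⟩, rfl⟩
    · rintro ⟨s, rfl⟩; exact ⟨s, s.2, rfl⟩
  let μ : U →ₗ[K] (U ⧸ Submodule.span K {x}) := (Submodule.span K {x}).mkQ
  have hμx : μ x = 0 :=
    (Submodule.Quotient.mk_eq_zero _).2 (Submodule.mem_span_singleton_self x)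
  let T := S.comap (LinearMap.lcomp K V μ)
  have hlift : ∀ s : U →ₗ[K] V, s x = 0 →
      ∃ t : (U ⧸ Submodule.span K {x}) →ₗ[K] V, t ∘ₗ μ = s := by
    intro s hs
    refine ⟨(Submodule.span K {x}).liftQ s ?_, Submodule.liftQ_mkQ _ _ _⟩
    rw [Submodule.span_singleton_le_iff_mem]; exact hs
  have hT : finrank K ((U ⧸ Submodule.span K {x}) →ₗ[K] V) + 3 ≤
      finrank K T + finrank K V := by
    have r1 := LinearMap.finrank_range_add_finrank_ker
      ((LinearMap.applyₗ (R := K) (M₂ := V) x).domRestrict S)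
    rw [LinearMap.range_domRestrict, ← hP, hx] at r1
    rw [← Submodule.finrank_map_subtype_eq] at r1
    have r2 : (LinearMap.ker ((LinearMap.applyₗ (R := K) (M₂ := V) x).domRestrict S)).map
        S.subtype ≤ T.map (LinearMap.lcomp K V μ) := by
      rintro _ ⟨s, hs, rfl⟩
      obtain ⟨t, ht⟩ := hlift s hs
      refine ⟨t, ?_, ht⟩
      change t ∘ₗ μ ∈ S
      rw [ht]; exact s.2
    have r3 := (Submodule.finrank_mono r2).trans (Submodule.finrank_map_le _ _)
    have r4 : finrank K (U ⧸ Submodule.span K {x}) + 1 = finrank K U := by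
      rw [← finrank_span_singleton (K := K) hx0]
      exact Submodule.finrank_quotient_add_finrank _
    rw [finrank_linearMap] at h1 ⊢
    rw [← r4, add_mul, one_mul] at h1
    omega
  let ρ : T →ₗ[K] S := (LinearMap.lcomp K V μ).restrict (fun t ht => ht)
  have hρ : ∀ t : T, ((ρ t : S) : U →ₗ[K] V) = (t : _ →ₗ[K] V) ∘ₗ μ := fun t => rfl
  have hrange : ∀ t : T, LinearMap.range ((ρ t : S) : U →ₗ[K] V) =
      LinearMap.range (t : (U ⧸ Submodule.span K {x}) →ₗ[K] V) := by
    intro t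
    rw [hρ]
    exact LinearMap.range_comp_of_range_eq_top _ (Submodule.range_mkQ _)
  obtain ⟨y', hy'⟩ := qx_A hK2 (finrank K V) V rfl T hT (FL ∘ₗ ρ) d hd0 (by
    intro t ht
    rw [← hrange] at ht ⊢
    exact hq' _ ht)
  obtain ⟨y, rfl⟩ := Submodule.mkQ_surjective _ y'
  have hy : ∀ s : S, (s : U →ₗ[K] V) x = 0 → F s = (s : U →ₗ[K] V) y := by
    intro s hs
    obtain ⟨t, ht⟩ := hlift s hs
    have htT : t ∈ T := by
      change t ∘ₗ μ ∈ S
      rw [ht]; exact s.2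
    have e : ρ ⟨t, htT⟩ = s := Subtype.ext ht
    have := hy' ⟨t, htT⟩
    change F (ρ ⟨t, htT⟩) = (t ∘ₗ μ) y at this
    rw [e, ht] at this
    exact this
  obtain ⟨φ, hφ⟩ := qx_factor ((LinearMap.applyₗ (R := K) (M₂ := V) x).domRestrict S)
    (FL - (LinearMap.applyₗ (R := K) (M₂ := V) y).domRestrict S) (by
      intro s hs
      exact sub_eq_zero.2 (hy s hs))
  have hφ' : ∀ s : S, F s - (s : U →ₗ[K] V) y = φ ((s : U →ₗ[K] V) x) := hφ
  have hφ2 : ∀ s : S, F s = (s : U →ₗ[K] V) y + φ ((s : U →ₗ[K] V) x) := fun s => by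
    rw [← hφ']; abel
  have key : ∀ p ∈ P, p ≠ d → φ p = 0 ∨ φ p = p := by
    intro p hp hpd
    obtain ⟨s0, rfl⟩ := (hmP p).1 hp
    by_contra hcon
    have hb : φ ((s0 : U →ₗ[K] V) x) ∉ Submodule.span K {(s0 : U →ₗ[K] V) x} := by
      intro h
      obtain ⟨c, hc⟩ := Submodule.mem_span_singleton.1 h
      apply hcon
      rw [← hc]
      rcases hK2 c with rfl | rfl <;> simp
    obtain ⟨s, hs, hsx, hsd, hsb⟩ := qx_P hK2 S x hT s0 s0.2 d _
      (qx_notMem_span hK2 d _ hd0 hpd) hb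
    apply hsb
    have h := hφ' ⟨s, hs⟩
    rw [← hsx]
    change F ⟨s, hs⟩ - s y = φ (s x) at h
    rw [← h]
    exact Submodule.sub_mem _ (hq' ⟨s, hs⟩ hsd) ⟨y, rfl⟩
  have hn0 : ∃ p ∈ P, φ p ≠ 0 := by
    by_contra! h
    exact hnl ⟨y, fun s => by rw [hφ2, h _ ((hmP _).2 ⟨s, rfl⟩), add_zero]⟩
  have hn1 : ∃ p ∈ P, φ p ≠ p := by
    by_contra! h
    exact hnl ⟨y + x, fun s => by rw [hφ2, h _ ((hmP _).2 ⟨s, rfl⟩), map_add]⟩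
  have hdP : d ∈ P := by
    by_contra hdn
    have key' : ∀ p ∈ P, φ p = 0 ∨ φ p = p := fun p hp =>
      key p hp (by rintro rfl; exact hdn hp)
    obtain ⟨p1, hp1, h1⟩ := hn0
    obtain ⟨p2, hp2, h2⟩ := hn1
    have e1 := (key' p1 hp1).resolve_left h1
    have e2 := (key' p2 hp2).resolve_right h2
    rcases key' _ (P.add_mem hp1 hp2) with h | h <;> rw [map_add, e1, e2, add_zero] at h
    · exact h1 (by rw [h, map_zero])
    · have : p2 = 0 := by simpa using h
      exact h2 (by rw [this, map_zero])
  refine ⟨(hDR _).2 hdP, y, φ, ?_⟩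
  obtain ⟨e, heP, heD⟩ : ∃ e ∈ P, e ∉ D := by
    by_contra! h
    have := Submodule.finrank_mono (show P ≤ D from h)
    omega
  have he0 : e ≠ 0 := by rintro rfl; exact heD D.zero_mem
  have hed : e ≠ d := by rintro rfl; exact heD hdD
  have hedD : e + d ∉ D := fun h => heD (by simpa using D.sub_mem h hdD)
  have hspan : Submodule.span K {e, d} = P := by
    apply Submodule.eq_of_le_of_finrank_le
    · rw [Submodule.span_le]; rintro z (rfl | rfl)
      · exact heP
      · exact hdP
    · rw [hx]
      have hlt : Submodule.span K {d} < Submodule.span K {e, d} := by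
        refine lt_of_le_of_ne (Submodule.span_mono (by simp)) fun h => heD ?_
        rw [hDd, h]; exact Submodule.subset_span (by simp)
      have := Submodule.finrank_lt_finrank_of_lt hlt
      rw [finrank_span_singleton hd0] at this
      omega
  -- the two relevant vectors
  obtain ⟨e1, e2, h1P, h2P, h1D, h2D, hs12, hf1, hf2⟩ : ∃ e1 e2 : V, e1 ∈ P ∧ e2 ∈ P ∧
      e1 ∉ D ∧ e2 ∉ D ∧ Submodule.span K {e1, e2} = P ∧ φ e1 = e1 ∧ φ e2 = 0 := by
    have hsp : ∀ z ∈ P, ∃ a b : K, a • e + b • (e + d) = z := by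
      intro z hz
      rw [← hspan] at hz
      obtain ⟨a, b, h⟩ := Submodule.mem_span_pair.1 hz
      exact ⟨a - b, b, by rw [← h, sub_smul, smul_add]; abel⟩
    have hs1 : Submodule.span K {e, e + d} = P := by
      apply le_antisymm
      · rw [Submodule.span_le]; rintro z (rfl | rfl)
        · exact heP
        · exact P.add_mem heP hdP
      · intro z hz
        exact Submodule.mem_span_pair.2 (hsp z hz)
    have hedP := P.add_mem heP hdP
    rcases key e heP hed with h | h <;>
      rcases key (e + d) hedP (fun h => hedD (by rw [h]; exact hdD)) with h' | h'
    · exfalso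
      obtain ⟨p, hp, hne⟩ := hn0
      obtain ⟨a, b, rfl⟩ := hsp p hp
      exact hne (by rw [map_add, map_smul, map_smul, h, h']; simp)
    · exact ⟨e + d, e, hedP, heP, hedD, heD, by rw [Set.pair_comm]; exact hs1, h', h⟩
    · exact ⟨e, e + d, heP, hedP, heD, hedD, hs1, h, h'⟩
    · exfalso
      obtain ⟨p, hp, hne⟩ := hn1
      obtain ⟨a, b, rfl⟩ := hsp p hp
      exact hne (by rw [map_add, map_smul, map_smul, h, h'])
  have hval : ∀ z ∈ P, ∃ a : K, φ z = a • e1 := by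
    intro z hz
    rw [← hs12] at hz
    obtain ⟨a, b, rfl⟩ := Submodule.mem_span_pair.1 hz
    exact ⟨a, by rw [map_add, map_smul, map_smul, hf1, hf2]; simp⟩
  have h10 : e1 ≠ 0 := by rintro rfl; exact h1D D.zero_mem
  have himg : Submodule.map φ P = Submodule.span K {e1} := by
    apply le_antisymm
    · rintro _ ⟨z, hz, rfl⟩
      obtain ⟨a, ha⟩ := hval z hz
      rw [ha]; exact Submodule.smul_mem _ _ (Submodule.mem_span_singleton_self _)
    · rw [Submodule.span_singleton_le_iff_mem]
      exact ⟨e1, h1P, hf1⟩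
  refine ⟨?_, ?_, ?_, ?_, ?_, hφ2⟩
  · intro z hz
    obtain ⟨a, ha⟩ := hval z hz
    rw [ha]; exact P.smul_mem _ h1P
  · intro z hz
    obtain ⟨a, ha⟩ := hval z hz
    rw [ha, map_smul, hf1]
  · rw [himg, finrank_span_singleton h10]
  · rw [himg]
    intro h
    exact h1D (by rw [← h]; exact Submodule.mem_span_singleton_self _)
  · intro h
    exact h2D (by rw [← h]; exact ⟨h2P, hf2⟩)
end

section
/- Let U and V be finite-dimensional vector spaces over a field K with more than 3 elements, with dim V = 2, and let S be a linear subspace of L(U,V) with codim S ≤ 2·dim V − 3. Then either S has special type 1, or every quasi-range-compatible K-linear map F : S → V is local. -/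
theorem aux_four (K : Type*) (hK : 3 < Cardinal.mk K) : ∃ f : Fin 4 → K, Function.Injective f := by
  rcases finite_or_infinite K with h | h
  · have := Fintype.ofFinite K
    rw [Cardinal.mk_fintype] at hK
    have h4 : 3 < Fintype.card K := by exact_mod_cast hK
    have : Nonempty (Fin 4 ↪ K) := Function.Embedding.nonempty_of_card_le (by simp; omega)
    exact ⟨this.some, this.some.injective⟩
  · exact ⟨fun i => Infinite.natEmbedding K i, fun i j hij => by
      exact Fin.ext ((Infinite.natEmbedding K).injective hij)⟩

theorem aux_cubic {K : Type*} [Field K] (f : Fin 4 → K) (hf : Function.Injective f) (a b c d : K)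
    (h : ∀ i, a + b * f i + c * f i ^ 2 + d * f i ^ 3 = 0) : a = 0 ∧ b = 0 ∧ c = 0 ∧ d = 0 := by
  have h0 := h 0
  have h1 := h 1
  have h2 := h 2
  have h3 := h 3
  have n01 : f 0 - f 1 ≠ 0 := sub_ne_zero.2 (hf.ne (by decide))
  have n02 : f 0 - f 2 ≠ 0 := sub_ne_zero.2 (hf.ne (by decide))
  have n03 : f 0 - f 3 ≠ 0 := sub_ne_zero.2 (hf.ne (by decide))
  have n12 : f 1 - f 2 ≠ 0 := sub_ne_zero.2 (hf.ne (by decide))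
  have n13 : f 1 - f 3 ≠ 0 := sub_ne_zero.2 (hf.ne (by decide))
  have n23 : f 2 - f 3 ≠ 0 := sub_ne_zero.2 (hf.ne (by decide))
  generalize f 0 = x at *
  generalize f 1 = y at *
  generalize f 2 = z at *
  generalize f 3 = w at *
  have e1 : b + c * (x + y) + d * (x^2 + x*y + y^2) = 0 :=
    mul_left_cancel₀ n01 (by linear_combination h0 - h1)
  have e2 : b + c * (x + z) + d * (x^2 + x*z + z^2) = 0 :=
    mul_left_cancel₀ n02 (by linear_combination h0 - h2)
  have e3 : b + c * (x + w) + d * (x^2 + x*w + w^2) = 0 :=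
    mul_left_cancel₀ n03 (by linear_combination h0 - h3)
  have g1 : c + d * (x + y + z) = 0 := mul_left_cancel₀ n12 (by linear_combination e1 - e2)
  have g2 : c + d * (x + y + w) = 0 := mul_left_cancel₀ n13 (by linear_combination e1 - e3)
  have hd : d = 0 := mul_left_cancel₀ n23 (by linear_combination g1 - g2)
  subst hd
  have hc : c = 0 := by linear_combination g1
  subst hc
  have hb : b = 0 := by linear_combination e1
  subst hb
  exact ⟨by linear_combination h0, rfl, rfl, rfl⟩

theorem aux_quad {K U : Type*} [Field K] [AddCommGroup U] [Module K U] (W : Submodule K U)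
    (f : Fin 4 → K) (hf : Function.Injective f) (c m n : U)
    (h : ∀ i, c + f i • m + (f i ^ 2) • n ∈ W) : c ∈ W ∧ m ∈ W ∧ n ∈ W := by
  have n01 : f 0 - f 1 ≠ 0 := sub_ne_zero.2 (hf.ne (by decide))
  have n02 : f 0 - f 2 ≠ 0 := sub_ne_zero.2 (hf.ne (by decide))
  have n12 : f 1 - f 2 ≠ 0 := sub_ne_zero.2 (hf.ne (by decide))
  have e1 : m + (f 0 + f 1) • n ∈ W := (W.smul_mem_iff n01).1 (by
    convert W.sub_mem (h 0) (h 1) using 1; module)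
  have e2 : m + (f 0 + f 2) • n ∈ W := (W.smul_mem_iff n02).1 (by
    convert W.sub_mem (h 0) (h 2) using 1; module)
  have hn : n ∈ W := (W.smul_mem_iff n12).1 (by
    convert W.sub_mem e1 e2 using 1; module)
  have hm : m ∈ W := by
    convert W.sub_mem e1 (W.smul_mem (f 0 + f 1) hn) using 1; module
  refine ⟨?_, hm, hn⟩
  convert W.sub_mem (W.sub_mem (h 0) (W.smul_mem (f 0) hm)) (W.smul_mem (f 0 ^ 2) hn) using 1; module

theorem aux_form {K U V : Type*} [Field K] [AddCommGroup U] [Module K U] [FiniteDimensional K U]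
    [AddCommGroup V] [Module K V] (b : Module.Basis (Fin 2) K V) (ψ : (U →ₗ[K] V) →ₗ[K] K) :
    ∃ u v : U, ∀ s : U →ₗ[K] V, ψ s = b.coord 0 (s u) + b.coord 1 (s v) := by
  have key : ∀ w : V, ∃ u : U, ∀ φ : Module.Dual K U, ψ (φ.smulRight w) = φ u := by
    intro w
    refine ⟨(Module.evalEquiv K U).symm (ψ.comp (LinearMap.smulRightₗ.flip w)), fun φ => ?_⟩
    rw [Module.apply_evalEquiv_symm_apply]
    simp
  obtain ⟨u, hu⟩ := key (b 0)
  obtain ⟨v, hv⟩ := key (b 1)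
  refine ⟨u, v, fun s => ?_⟩
  have : s = ((b.coord 0).comp s).smulRight (b 0) + ((b.coord 1).comp s).smulRight (b 1) := by
    ext x
    have := b.sum_repr (s x)
    rw [Fin.sum_univ_two] at this
    simpa using this.symm
  conv_lhs => rw [this]
  rw [map_add, hu, hv]
  rfl

theorem aux_ker_s6 {K M : Type*} [Field K] [AddCommGroup M] [Module K M] [FiniteDimensional K M]
    (S : Submodule K M) (h : Module.finrank K M ≤ Module.finrank K S + 1) :
    ∃ ψ : M →ₗ[K] K, S = LinearMap.ker ψ := by
  by_cases hS : S = ⊤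
  · exact ⟨0, by simp [hS]⟩
  obtain ⟨ψ, hψ, hle⟩ := S.exists_le_ker_of_lt_top (lt_top_iff_ne_top.2 hS)
  refine ⟨ψ, Submodule.eq_of_le_of_finrank_le hle ?_⟩
  have h1 := LinearMap.finrank_range_add_finrank_ker ψ
  have h2 : LinearMap.range ψ = ⊤ := LinearMap.range_eq_top.2 (LinearMap.surjective hψ)
  rw [h2, finrank_top, Module.finrank_self] at h1
  omega

theorem aux_basis {K V : Type*} [Field K] [AddCommGroup V] [Module K V] [FiniteDimensional K V]
    (hV : Module.finrank K V = 2) (D : Submodule K V) (hD : Module.finrank K D = 1) :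
    ∃ b : Module.Basis (Fin 2) K V, b 1 ∈ D := by
  obtain ⟨e, he, hsp⟩ := finrank_eq_one_iff'.1 hD
  have hne : (e : V) ≠ 0 := by simpa using he
  obtain ⟨v, hv⟩ : ∃ v : V, v ∉ D := by
    by_contra! hc
    have : D = ⊤ := (Submodule.eq_top_iff' ).2 hc
    rw [this, finrank_top] at hD
    omega
  have li : LinearIndependent K ![v, (e : V)] := by
    rw [LinearIndependent.pair_iff]
    intro s t hst
    have hs : s = 0 := by
      by_contra hs
      exact hv ((D.smul_mem_iff hs).1 (by
        rw [eq_neg_of_add_eq_zero_left hst]; exact D.neg_mem (D.smul_mem _ e.2)))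
    subst hs
    simpa [hne] using hst
  refine ⟨basisOfLinearIndependentOfCardEqFinrank li (by simp [hV]), ?_⟩
  simp

theorem aux_type1 {K U V : Type*} [Field K] [AddCommGroup U] [Module K U]
    [AddCommGroup V] [Module K V] [FiniteDimensional K V] (hV : Module.finrank K V = 2)
    (S : Submodule K (U →ₗ[K] V)) (φ : V →ₗ[K] K) (hφ : φ ≠ 0) (w : U) (hw : w ≠ 0)
    (hS : ∀ s, s ∈ S ↔ φ (s w) = 0) :
    Module.finrank K (Submodule.map (LinearMap.applyₗ w) S) = 1 := by
  have : Submodule.map (LinearMap.applyₗ w) S = LinearMap.ker φ := by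
    ext v
    simp only [Submodule.mem_map, LinearMap.mem_ker]
    constructor
    · rintro ⟨s, hs, rfl⟩
      exact (hS s).1 hs
    · intro hv
      obtain ⟨f, hf⟩ : ∃ f : Module.Dual K U, f w ≠ 0 := by
        by_contra! hc
        exact hw ((Module.forall_dual_apply_eq_zero_iff K w).1 hc)
      refine ⟨f.smulRight ((f w)⁻¹ • v), (hS _).2 ?_, ?_⟩
      · simp [hv]
      · simp [smul_smul, hf]
  rw [this]
  have h1 := LinearMap.finrank_range_add_finrank_ker φ
  have h2 : LinearMap.range φ = ⊤ := LinearMap.range_eq_top.2 (LinearMap.surjective hφ)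
  rw [h2, finrank_top, Module.finrank_self] at h1
  omega

theorem aux_solve {K U : Type*} [Field K] [AddCommGroup U] [Module K U]
    (f : Fin 4 → K) (hf : Function.Injective f) (u v a b c d : U)
    (huv : LinearIndependent K ![u, v] ∨ (u = 0 ∧ v = 0))
    (h : ∀ t : K, c + t • (d - a) + t ^ 2 • (-b) ∈ Submodule.span K {u + t • v}) :
    ∃ (x : U) (α β : K), a = x + α • u ∧ b = α • v ∧ c = β • u ∧ d = x + β • v := by
  have hq : c ∈ Submodule.span K {u, v} ∧ d - a ∈ Submodule.span K {u, v} ∧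
      -b ∈ Submodule.span K {u, v} := by
    apply aux_quad _ f hf
    intro i
    refine (Submodule.span_le.2 ?_ : Submodule.span K {u + f i • v} ≤ _) (h (f i))
    rw [Set.singleton_subset_iff]
    exact Submodule.mem_span_pair.2 ⟨1, f i, by simp⟩
  obtain ⟨hc, hm, hn⟩ := hq
  obtain ⟨c1, c2, hc⟩ := Submodule.mem_span_pair.1 hc
  obtain ⟨m1, m2, hm⟩ := Submodule.mem_span_pair.1 hm
  obtain ⟨n1, n2, hn⟩ := Submodule.mem_span_pair.1 hn
  have hd : d = a + (m1 • u + m2 • v) := by rw [hm]; abel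
  have hb : b = -(n1 • u + n2 • v) := by rw [hn]; abel
  rcases huv with li | ⟨rfl, rfl⟩
  · have hz := aux_cubic f hf c2 (m2 - c1) (n2 - m1) (-n1) (by
      intro i
      obtain ⟨k, hk⟩ := Submodule.mem_span_singleton.1 (h (f i))
      rw [← hc, ← hm, ← hn] at hk
      have := LinearIndependent.pair_iff.1 li (c1 + f i * m1 + f i ^ 2 * n1 - k)
        (c2 + f i * m2 + f i ^ 2 * n2 - k * f i) (by
          rw [← sub_eq_zero.2 hk.symm]; module)
      linear_combination this.2 - f i * this.1)
    obtain ⟨z1, z2, z3, z4⟩ := hz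
    have z2 : m2 = c1 := sub_eq_zero.1 z2
    have z3 : n2 = m1 := sub_eq_zero.1 z3
    have z4 : n1 = 0 := neg_eq_zero.1 z4
    subst z1 z2 z3 z4
    refine ⟨a + n2 • u, -n2, m2, by module, by rw [hb]; module, by rw [← hc]; module,
      by rw [hd]; module⟩
  · exact ⟨a, 0, 0, by simp, by simp [hb], by simp [← hc], by simp [hd]⟩


/-- Let `K` have more than 3 elements, `dim V = 2`, and `S` a linear
subspace of `L(U,V)` with `codim S ≤ 2 dim V − 3`. Then either `S` has special type 1
(there is `x ∈ U` with `dim Sx = 1`), or every quasi-range-compatible `K`-linear map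
`F : S → V` is local. -/
theorem quasi_range_compatible_linear_map_local_or_special_type_one
    (K U V : Type*) [Field K] (hK : 3 < Cardinal.mk K)
    [AddCommGroup U] [Module K U] [FiniteDimensional K U]
    [AddCommGroup V] [Module K V] [FiniteDimensional K V]
    (hV : Module.finrank K V = 2)
    (S : Submodule K (U →ₗ[K] V))
    (h1 : Module.finrank K (U →ₗ[K] V) + 3 ≤
      Module.finrank K S + 2 * Module.finrank K V) :
    (∃ x : U, Module.finrank K (Submodule.map (LinearMap.applyₗ x) S) = 1) ∨
    (∀ F : ↥S →ₗ[K] V,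
      (∃ D : Submodule K V, Module.finrank K D = 1 ∧
        ∀ s : ↥S, ¬ D ≤ LinearMap.range (s : U →ₗ[K] V) →
          F s ∈ LinearMap.range (s : U →ₗ[K] V)) →
      ∃ x : U, ∀ s : ↥S, F s = (s : U →ₗ[K] V) x) := by
  obtain ⟨f, hf⟩ := aux_four K hK
  obtain ⟨ψ, hψ⟩ := aux_ker_s6 S (by omega)
  by_cases hex : ∃ x : U, Module.finrank K (Submodule.map (LinearMap.applyₗ x) S) = 1
  · exact Or.inl hex
  refine Or.inr ?_
  rintro F ⟨D, hD, hF⟩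
  obtain ⟨e, heD⟩ := aux_basis hV D hD
  obtain ⟨u, v, huv⟩ := aux_form e ψ
  have hS : ∀ s, s ∈ S ↔ e.coord 0 (s u) + e.coord 1 (s v) = 0 := by
    intro s
    rw [hψ, LinearMap.mem_ker, huv]
  have hli : LinearIndependent K ![u, v] ∨ (u = 0 ∧ v = 0) := by
    by_contra! hc
    obtain ⟨hc1, hc2⟩ := hc
    apply hex
    by_cases hu : u = 0
    · have hv := hc2 hu
      refine ⟨v, aux_type1 hV S (e.coord 1) (fun h => ?_) v hv (fun s => by simp [hS, hu])⟩
      simpa using LinearMap.congr_fun h (e 1)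
    · rw [LinearIndependent.pair_iff' hu] at hc1
      push Not at hc1
      obtain ⟨k, hk⟩ := hc1
      refine ⟨u, aux_type1 hV S (e.coord 0 + k • e.coord 1) (fun h => ?_) u hu
        (fun s => by simp [hS, ← hk])⟩
      simpa using LinearMap.congr_fun h (e 0)
  obtain ⟨G1, hG1⟩ := LinearMap.exists_extend ((e.coord 0).comp F)
  obtain ⟨G2, hG2⟩ := LinearMap.exists_extend ((e.coord 1).comp F)
  obtain ⟨a, b, hab⟩ := aux_form e G1
  obtain ⟨c, d, hcd⟩ := aux_form e G2
  have hF1 : ∀ s : S, e.coord 0 (F s) = e.coord 0 (s.1 a) + e.coord 1 (s.1 b) := fun s => by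
    rw [← hab]; exact (LinearMap.congr_fun hG1 s).symm
  have hF2 : ∀ s : S, e.coord 1 (F s) = e.coord 0 (s.1 c) + e.coord 1 (s.1 d) := fun s => by
    rw [← hcd]; exact (LinearMap.congr_fun hG2 s).symm
  obtain ⟨x, α, β, ha, hb, hc, hd⟩ := aux_solve f hf u v a b c d hli (by
    intro t
    by_contra hmem
    obtain ⟨φ, hφ, hle⟩ := Submodule.exists_le_ker_of_notMem hmem
    have hφu : φ u + t * φ v = 0 := by
      have := hle (Submodule.mem_span_singleton_self (u + t • v))
      simpa using this
    have hsS : φ.smulRight (e 0 + t • e 1) ∈ S := by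
      rw [hS]
      simp
      linear_combination hφu
    have hr := hF ⟨_, hsS⟩ (by
      intro hDle
      obtain ⟨y, hy⟩ := hDle heD
      have h0 := congrArg (e.coord 0) hy
      have h1 := congrArg (e.coord 1) hy
      simp at h0 h1
      simp [h0] at h1)
    obtain ⟨y, hy⟩ := hr
    have h0 := congrArg (e.coord 0) hy
    have h1 := congrArg (e.coord 1) hy
    rw [hF1] at h0
    rw [hF2] at h1
    simp at h0 h1
    apply hφ
    simp
    linear_combination t * h0 - h1)
  refine ⟨x, fun s => ?_⟩
  have hs := (hS s.1).1 s.2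
  have h0 := hF1 s
  have h1 := hF2 s
  rw [ha, hb] at h0
  rw [hc, hd] at h1
  apply e.ext_elem
  intro i
  simp only [map_add, map_smul, smul_eq_mul] at h0 h1
  fin_cases i
  · change e.coord 0 (F s) = e.coord 0 (s.1 x)
    linear_combination h0 + α * hs
  · change e.coord 1 (F s) = e.coord 1 (s.1 x)
    linear_combination h1 + β * hs
end
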